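/- Let F⃗ be an acyclic oriented graph with m₂(F⃗) > 1 and let 0 < γ < 1. Then there exists a constant B ≥ 1 such that, with p = p(n) = B·n^{−(1−γ)/m₂(F⃗)}, a.a.s. the random graph G = G(n,p) has the property that G[W] → F⃗ for every vertex subset W ⊆ V(G) with |W| ≥ n^{1−γ}. -/

import Mathlib

open Classical in
/-- The probability that the binomial random graph `G(n,p)` satisfies the property `Q`. -/
noncomputable def probGnp (n : ℕ) (p : ℝ) (Q : SimpleGraph (Fin n) → Prop) : ℝ :=
  ∑ G : SimpleGraph (Fin n),
    if Q G then p ^ G.edgeSet.ncard * (1 - p) ^ (n.choose 2 - G.edgeSet.ncard) else 0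
/-- `o` is an orientation of the simple graph `G`: every edge of `G` is assigned
exactly one direction, and there are no other arcs. -/
def IsOrientation {α : Type*} (G : SimpleGraph α) (o : α → α → Prop) : Prop :=
  (∀ u v, o u v → G.Adj u v) ∧ ∀ u v, G.Adj u v → (o u v ↔ ¬ o v u)

/-- The digraph `o` contains a (not necessarily induced) copy of the oriented graph `H`
as a subdigraph. -/
def HasCopy {α β : Type*} (o : α → α → Prop) (H : β → β → Prop) : Prop :=
  ∃ f : β → α, Function.Injective f ∧ ∀ a b, H a b → o (f a) (f b)

/-- `G → H⃗`: every orientation of `G` contains a copy of `H`. -/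
def Arrows {α β : Type*} (G : SimpleGraph α) (H : β → β → Prop) : Prop :=
  ∀ o : α → α → Prop, IsOrientation G o → HasCopy o H
/-- The 2-density associated to a (sub)graph with `v` vertices and `e` edges:
`(e-1)/(v-2)` if `v ≥ 3`, `1/2` for a single edge, and `0` otherwise. -/
noncomputable def d2 (v e : ℕ) : ℝ :=
  if 3 ≤ v then (e - 1 : ℝ) / (v - 2 : ℝ) else if e = 1 then 1 / 2 else 0

/-- The maximum 2-density `m₂(H)` of a finite simple graph `H`. -/
noncomputable def m2 {α : Type*} [Fintype α] (H : SimpleGraph α) : ℝ :=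
  sSup {x : ℝ | ∃ J : H.Subgraph, x = d2 J.verts.ncard J.edgeSet.ncard}

/-- The maximum 2-density of an oriented graph: that of its underlying graph. -/
noncomputable def m2Rel {β : Type*} [Fintype β] (H : β → β → Prop) : ℝ :=
  m2 (SimpleGraph.fromRel H)
/-- A digraph is acyclic if it has no directed cycles, i.e. the transitive closure
of its arc relation is irreflexive. -/
def RelAcyclic {β : Type*} (H : β → β → Prop) : Prop :=
  Irreflexive (Relation.TransGen H)

/-!
An orientation of `G[W]` without a copy of `F` is an independent set `I` in the hypergraph whose
vertices are the ordered pairs in `W` and whose edges are the copies of `F`. Independent sets have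
small fingerprints: as long as some bounded set `L` is costly, meaning that adding it to the
`p`-random subset lowers the probability of independence by a factor `3 / 4`, either `L ⊆ I`, and
the traces `E \ L` become edges, or `L` itself becomes an edge. The sets `L ⊆ I` found in this way
form the fingerprint, and there are few of them since each one costs a factor `3 / 4`. In the final
hypergraph no set is costly, so by a second-moment argument its codegrees are bounded, and the
pairs which are not edges by themselves form a container of `I` that spans few copies of `F`.

A tournament on `2 ^ k` vertices contains every acyclic digraph on `k` vertices, hence a container
with few copies of `F` leaves a positive proportion of the pairs unjoined. If `G[W]` does not
arrow `F`, then for some fingerprint `S` all pairs in `S` are edges of `G` while no pair missed by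
the container is. Summed over all `S`, the probability of this is small enough to beat the number of
choices of `W`.
-/

section

open Finset

/-! ### Random subsets of a finite set -/

section RandomSubset

variable {V : Type*} [Fintype V]

/-- The probability that the `p`-random subset of `V`, which contains each element independently
with probability `p`, equals `R`. -/
def bernoulliWeight (p : ℝ) (R : Finset V) : ℝ :=
  p ^ #R * (1 - p) ^ (Fintype.card V - #R)

open scoped Classical in
/-- The probability that the `p`-random subset of `V` has the property `P`. -/
noncomputable def subsetProb (p : ℝ) (P : Finset V → Prop) : ℝ :=
  ∑ R with P R, bernoulliWeight p R

lemma bernoulliWeight_nonneg {p : ℝ} (hp₀ : 0 ≤ p) (hp₁ : p ≤ 1) (R : Finset V) :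
    0 ≤ bernoulliWeight p R :=
  mul_nonneg (pow_nonneg hp₀ _) (pow_nonneg (sub_nonneg.2 hp₁) _)

lemma bernoulliWeight_compl [DecidableEq V] (p : ℝ) (R : Finset V) :
    bernoulliWeight p Rᶜ = bernoulliWeight (1 - p) R := by
  rw [bernoulliWeight, bernoulliWeight, card_compl, Nat.sub_sub_self (card_le_univ R),
    sub_sub_cancel, mul_comm]

lemma mul_bernoulliWeight_add_insert [DecidableEq V] (p : ℝ) {v : V} {R : Finset V} (hv : v ∉ R) :
    p * (bernoulliWeight p R + bernoulliWeight p (insert v R)) =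
      bernoulliWeight p (insert v R) := by
  have hcard : #(insert v R) = #R + 1 := card_insert_of_notMem hv
  obtain ⟨k, hk⟩ : ∃ k, Fintype.card V = #R + 1 + k :=
    Nat.exists_eq_add_of_le (hcard ▸ card_le_univ _)
  have hk' : #R + 1 + k - #R = k + 1 := by omega
  rw [bernoulliWeight, bernoulliWeight, hcard, hk, hk', Nat.add_sub_cancel_left]
  ring

lemma subsetProb_nonneg {p : ℝ} (hp₀ : 0 ≤ p) (hp₁ : p ≤ 1) (P : Finset V → Prop) :
    0 ≤ subsetProb p P :=
  sum_nonneg fun R _ => bernoulliWeight_nonneg hp₀ hp₁ R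

lemma subsetProb_true (p : ℝ) : subsetProb p (fun _ : Finset V => True) = 1 := by
  simp [subsetProb, bernoulliWeight, Fintype.sum_pow_mul_eq_add_pow]

lemma subsetProb_mono {p : ℝ} (hp₀ : 0 ≤ p) (hp₁ : p ≤ 1) {P Q : Finset V → Prop}
    (h : ∀ R, P R → Q R) : subsetProb p P ≤ subsetProb p Q := by
  classical
  exact sum_le_sum_of_subset_of_nonneg (monotone_filter_right _ fun R _ => h R)
    fun R _ _ => bernoulliWeight_nonneg hp₀ hp₁ R

lemma subsetProb_and_add_and_not (p : ℝ) (P Q : Finset V → Prop) :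
    subsetProb p (fun R => P R ∧ Q R) + subsetProb p (fun R => P R ∧ ¬ Q R) = subsetProb p P := by
  classical
  simp only [subsetProb, ← filter_filter]
  exact sum_filter_add_sum_filter_not _ _ _

lemma subsetProb_compl (p : ℝ) (P : Finset V → Prop) :
    subsetProb p P = 1 - subsetProb p fun R => ¬ P R := by
  have h := subsetProb_and_add_and_not p (fun _ => True) P
  simp only [true_and, subsetProb_true] at h
  linarith

lemma subsetProb_le_sum {p : ℝ} (hp₀ : 0 ≤ p) (hp₁ : p ≤ 1) {ι : Type*} (s : Finset ι)
    {P : Finset V → Prop} {Q : ι → Finset V → Prop} (h : ∀ R, P R → ∃ i ∈ s, Q i R) :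
    subsetProb p P ≤ ∑ i ∈ s, subsetProb p (Q i) := by
  classical
  have hw : ∀ R : Finset V, ∀ i ∈ s, 0 ≤ if Q i R then bernoulliWeight p R else 0 :=
    fun R i _ => by split_ifs; exacts [bernoulliWeight_nonneg hp₀ hp₁ R, le_rfl]
  simp only [subsetProb, sum_filter]
  rw [sum_comm]
  refine sum_le_sum fun R _ => ?_
  split_ifs with hR
  · obtain ⟨i, hi, hQ⟩ := h R hR
    simpa only [hQ, if_true] using single_le_sum (hw R) hi
  · exact sum_nonneg (hw R)

lemma subsetProb_and_mem [DecidableEq V] (p : ℝ) (P : Finset V → Prop) (v : V) :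
    subsetProb p (fun R => P R ∧ v ∈ R) = p * subsetProb p fun R => P (insert v R) := by
  classical
  have huniv : (univ : Finset (Finset V)) = (insert v (univ.erase v)).powerset := by
    rw [insert_erase (mem_univ v), powerset_univ]
  simp only [subsetProb, sum_filter]
  rw [huniv, sum_powerset_insert (notMem_erase v _), sum_powerset_insert (notMem_erase v _),
    ← sum_add_distrib, ← sum_add_distrib, mul_sum]
  refine sum_congr rfl fun R hR => ?_
  have hv : v ∉ R := fun h => notMem_erase v _ (mem_powerset.1 hR h)
  by_cases hP : P (insert v R) <;> simp [hv, hP, mul_bernoulliWeight_add_insert]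

lemma subsetProb_and_subset [DecidableEq V] (p : ℝ) (P : Finset V → Prop) (S : Finset V) :
    subsetProb p (fun R => P R ∧ S ⊆ R) = p ^ #S * subsetProb p fun R => P (R ∪ S) := by
  induction S using Finset.induction_on generalizing P with
  | empty => simp
  | insert v S hv ih =>
    calc subsetProb p (fun R => P R ∧ insert v S ⊆ R)
        = subsetProb p (fun R => (P R ∧ v ∈ R) ∧ S ⊆ R) := by
          simp only [insert_subset_iff, and_assoc]
      _ = p ^ #S * subsetProb p (fun R => P (R ∪ S) ∧ v ∈ R) := by
          simp only [ih, mem_union, hv, or_false]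
      _ = p ^ #(insert v S) * subsetProb p (fun R => P (R ∪ insert v S)) := by
          simp only [subsetProb_and_mem p fun R => P (R ∪ S), card_insert_of_notMem hv, pow_succ,
            mul_assoc, union_insert, insert_union]

lemma subsetProb_disjoint (p : ℝ) (T : Finset V) :
    subsetProb p (fun R => Disjoint T R) = (1 - p) ^ #T := by
  classical
  have h := subsetProb_and_subset (1 - p) (fun _ => True) T
  simp only [true_and, subsetProb_true, mul_one] at h
  rw [← h, subsetProb, subsetProb, sum_filter, sum_filter]
  refine Fintype.sum_equiv (Equiv.ofBijective _ compl_bijective) _ _ fun R => ?_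
  simp only [Equiv.ofBijective_apply, subset_compl_iff_disjoint_right, bernoulliWeight_compl,
    sub_sub_cancel]
  congr!

lemma subsetProb_subset_and_disjoint (p : ℝ) {S T : Finset V} (h : Disjoint S T) :
    subsetProb p (fun R => S ⊆ R ∧ Disjoint T R) = p ^ #S * (1 - p) ^ #T := by
  classical
  simp only [and_comm (a := S ⊆ _)]
  rw [subsetProb_and_subset, ← subsetProb_disjoint]
  simp only [disjoint_union_right, h.symm, and_true]

end RandomSubset

/-! ### Fingerprints of independent sets -/

section Fingerprint

variable {V : Type*}

/-- `R` is independent in the hypergraph with edge set `H`: it contains no edge. -/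
def IsIndependent (H : Finset (Finset V)) (R : Finset V) : Prop := ∀ E ∈ H, ¬ E ⊆ R

lemma IsIndependent.mono {H : Finset (Finset V)} {R S : Finset V} (hS : IsIndependent H S)
    (h : R ⊆ S) : IsIndependent H R := fun E hE hER => hS E hE (hER.trans h)

variable [DecidableEq V]

lemma isIndependent_insert {H : Finset (Finset V)} {L R : Finset V} :
    IsIndependent (insert L H) R ↔ ¬ L ⊆ R ∧ IsIndependent H R := by
  simp only [IsIndependent, mem_insert, forall_eq_or_imp]

/-- The edges of `H` together with their traces outside `L`. Its independent sets are the sets `R`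
for which `R ∪ L` is independent in `H`. -/
def linkUnion (H : Finset (Finset V)) (L : Finset V) : Finset (Finset V) := H ∪ H.image (· \ L)

lemma isIndependent_linkUnion {H : Finset (Finset V)} {L R : Finset V} :
    IsIndependent (linkUnion H L) R ↔ IsIndependent H (R ∪ L) := by
  have hsub : ∀ E : Finset V, E \ L ⊆ R ↔ E ⊆ R ∪ L := fun E => by
    rw [sdiff_le_iff, sup_eq_union, union_comm]
  simp only [IsIndependent, linkUnion, mem_union, mem_image, or_imp, forall_and,
    forall_exists_index, and_imp, forall_apply_eq_imp_iff₂, hsub]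
  exact ⟨And.right, fun h => ⟨fun E hE hER => h E hE (hER.trans subset_union_left), h⟩⟩

lemma card_le_of_mem_linkUnion {H : Finset (Finset V)} {r : ℕ} (hr : ∀ E ∈ H, #E ≤ r)
    (L : Finset V) : ∀ E ∈ linkUnion H L, #E ≤ r := by
  simp only [linkUnion, mem_union, mem_image]
  rintro E (hE | ⟨E, hE, rfl⟩)
  exacts [hr E hE, (card_le_card sdiff_subset).trans (hr E hE)]

variable [Fintype V]

/-- The probability that the union of `L` and the `p`-random subset is independent in `H`. -/
noncomputable def indepProb (p : ℝ) (H : Finset (Finset V)) (L : Finset V) : ℝ :=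
  subsetProb p fun R => IsIndependent H (R ∪ L)

lemma indepProb_le_one {p : ℝ} (hp₀ : 0 ≤ p) (hp₁ : p ≤ 1) (H : Finset (Finset V)) (L : Finset V) :
    indepProb p H L ≤ 1 :=
  (subsetProb_mono hp₀ hp₁ fun _ _ => trivial).trans_eq (subsetProb_true p)

lemma indepProb_anti {p : ℝ} (hp₀ : 0 ≤ p) (hp₁ : p ≤ 1) (H : Finset (Finset V)) {L L' : Finset V}
    (h : L ⊆ L') : indepProb p H L' ≤ indepProb p H L :=
  subsetProb_mono hp₀ hp₁ fun _ hR => hR.mono (union_subset_union_right h)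

lemma pow_card_le_indepProb_empty {p : ℝ} (hp₀ : 0 ≤ p) (hp₁ : p ≤ 1) {H : Finset (Finset V)}
    (h : IsIndependent H ∅) : (1 - p) ^ Fintype.card V ≤ indepProb p H ∅ := by
  rw [← card_univ, ← subsetProb_disjoint]
  refine subsetProb_mono hp₀ hp₁ fun R hR => ?_
  obtain rfl : R = ∅ := eq_empty_of_forall_notMem fun v => disjoint_left.1 hR (mem_univ v)
  simpa using h

lemma indepProb_empty_pos {p : ℝ} (hp₀ : 0 ≤ p) (hp₁ : p < 1) {H : Finset (Finset V)}
    (h : IsIndependent H ∅) : 0 < indepProb p H ∅ :=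
  (pow_pos (sub_pos.2 hp₁) _).trans_le (pow_card_le_indepProb_empty hp₀ hp₁.le h)

/-- `H` is stable if no independent set `L` of at most `r` vertices is costly: conditioned on being
independent, the `p`-random subset stays independent with probability at least `3 / 4` when `L` is
added to it. -/
def IsStable (p : ℝ) (r : ℕ) (H : Finset (Finset V)) : Prop :=
  ∀ L, #L ≤ r → IsIndependent H L → 3 / 4 * indepProb p H ∅ ≤ indepProb p H L

/-- `G` is a stable hypergraph with edges of size at most `r` containing `H`, in which `I` is still
independent. -/
structure IsStableExtension (p : ℝ) (r : ℕ) (H G : Finset (Finset V)) (I : Finset V) : Prop where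
  isStable : IsStable p r G
  subset : H ⊆ G
  card_le : ∀ E ∈ G, #E ≤ r
  isIndependent : IsIndependent G I

/-- `I` has a fingerprint with respect to `f`: a subset `S` assembled from `k` costly sets of at
most `r` vertices, such that every set `T` between `S` and `I` determines a stable extension `f T`
of `H` for `I`. Each costly set lowers the probability of independence by a factor `3 / 4`, which
bounds `k`. -/
def HasFingerprint (p : ℝ) (r : ℕ) (H : Finset (Finset V)) (f : Finset V → Finset (Finset V))
    (I : Finset V) : Prop :=
  ∃ S ⊆ I, ∃ k : ℕ, #S ≤ r * k ∧
    (1 - p) ^ Fintype.card V ≤ (3 / 4) ^ k * indepProb p H ∅ ∧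
    ∀ T, S ⊆ T → T ⊆ I → IsStableExtension p r H (f T) I

lemma indepProb_linkUnion_empty (p : ℝ) (H : Finset (Finset V)) (L : Finset V) :
    indepProb p (linkUnion H L) ∅ = indepProb p H L := by
  simp only [indepProb, isIndependent_linkUnion, union_empty]

lemma IsStable.hasFingerprint {p : ℝ} (hp₀ : 0 ≤ p) (hp₁ : p ≤ 1) {r : ℕ}
    {H : Finset (Finset V)} (hH : IsStable p r H) (hr : ∀ E ∈ H, #E ≤ r) {I : Finset V}
    (hI : IsIndependent H I) : HasFingerprint p r H (fun _ => H) I :=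
  ⟨∅, empty_subset I, 0, by simp,
    by simpa using pow_card_le_indepProb_empty hp₀ hp₁ (hI.mono (empty_subset I)),
    fun _ _ _ => ⟨hH, Subset.rfl, hr, hI⟩⟩

lemma HasFingerprint.of_linkUnion {p : ℝ} {r : ℕ} {H : Finset (Finset V)} {L I : Finset V}
    (hLr : #L ≤ r) (hL : indepProb p H L ≤ 3 / 4 * indepProb p H ∅) (hLI : L ⊆ I)
    {f g : Finset V → Finset (Finset V)} (hfg : ∀ T, L ⊆ T → f T = g T)
    (hg : HasFingerprint p r (linkUnion H L) g I) : HasFingerprint p r H f I := by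
  obtain ⟨S, hSI, k, hSk, hk, hext⟩ := hg
  refine ⟨S ∪ L, union_subset hSI hLI, k + 1, ?_, ?_, fun T hST hTI => ?_⟩
  · calc #(S ∪ L) ≤ #S + #L := card_union_le S L
      _ ≤ r * k + r := by gcongr
      _ = r * (k + 1) := by ring
  · calc (1 - p) ^ Fintype.card V ≤ (3 / 4) ^ k * indepProb p H L := by
          rwa [indepProb_linkUnion_empty] at hk
      _ ≤ (3 / 4) ^ k * (3 / 4 * indepProb p H ∅) := by gcongr
      _ = (3 / 4) ^ (k + 1) * indepProb p H ∅ := by ring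
  · obtain ⟨hstable, hsub, hcard, hind⟩ := hext T (subset_union_left.trans hST) hTI
    rw [hfg T (subset_union_right.trans hST)]
    exact ⟨hstable, subset_union_left.trans hsub, hcard, hind⟩

lemma HasFingerprint.of_insert {p : ℝ} (hp₀ : 0 ≤ p) (hp₁ : p ≤ 1) {r : ℕ}
    {H : Finset (Finset V)} {L I : Finset V} (hLI : ¬ L ⊆ I) {f g : Finset V → Finset (Finset V)}
    (hfg : ∀ T, ¬ L ⊆ T → f T = g T) (hg : HasFingerprint p r (insert L H) g I) :
    HasFingerprint p r H f I := by
  obtain ⟨S, hSI, k, hSk, hk, hext⟩ := hg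
  refine ⟨S, hSI, k, hSk, hk.trans ?_, fun T hST hTI => ?_⟩
  · exact mul_le_mul_of_nonneg_left
      (subsetProb_mono hp₀ hp₁ fun R hR => (isIndependent_insert.1 hR).2) (by positivity)
  · obtain ⟨hstable, hsub, hcard, hind⟩ := hext T hST hTI
    rw [hfg T fun h => hLI (h.trans hTI)]
    exact ⟨hstable, (subset_insert L H).trans hsub, hcard, hind⟩

open scoped Classical in
lemma card_isIndependent_linkUnion_lt {p : ℝ} {H : Finset (Finset V)} {L : Finset V}
    (hL : indepProb p H L < indepProb p H ∅) :
    #{R | IsIndependent (linkUnion H L) R} < #{R | IsIndependent H R} := by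
  refine card_lt_card (Finset.ssubset_iff_subset_ne.2 ⟨fun R hR => ?_, fun heq => hL.ne ?_⟩)
  · rw [mem_filter_univ, isIndependent_linkUnion] at hR
    exact (mem_filter_univ R).2 (hR.mono subset_union_left)
  · rw [← indepProb_linkUnion_empty]
    simp only [indepProb, subsetProb, union_empty, heq]

open scoped Classical in
lemma card_isIndependent_insert_lt {H : Finset (Finset V)} {L : Finset V}
    (hL : IsIndependent H L) :
    #{R | IsIndependent (insert L H) R} < #{R | IsIndependent H R} := by
  refine card_lt_card (ssubset_iff_of_subset (fun R hR => ?_) |>.2 ⟨L, ?_, ?_⟩)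
  · rw [mem_filter_univ, isIndependent_insert] at hR
    exact (mem_filter_univ R).2 hR.2
  · exact (mem_filter_univ L).2 hL
  · simp [isIndependent_insert]

-- As long as some `L` is costly, ask whether `L ⊆ I`; the answer can be read off from `L ⊆ T`.
theorem exists_forall_hasFingerprint {p : ℝ} (hp₀ : 0 ≤ p) (hp₁ : p < 1) {r : ℕ}
    (H : Finset (Finset V)) (hr : ∀ E ∈ H, #E ≤ r) :
    ∃ f : Finset V → Finset (Finset V), ∀ I, IsIndependent H I → HasFingerprint p r H f I := by
  classical
  induction hm : #{R | IsIndependent H R} using Nat.strong_induction_on generalizing H with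
  | _ m ih =>
  subst hm
  by_cases hH : IsStable p r H
  · exact ⟨fun _ => H, fun I hI => hH.hasFingerprint hp₀ hp₁.le hr hI⟩
  simp only [IsStable, not_forall, not_le] at hH
  obtain ⟨L, hLr, hL, hcost⟩ := hH
  have hpos : 0 < indepProb p H ∅ := indepProb_empty_pos hp₀ hp₁ (hL.mono (empty_subset L))
  obtain ⟨f, hf⟩ := ih _ (card_isIndependent_linkUnion_lt (by linarith)) _
    (card_le_of_mem_linkUnion hr L) rfl
  obtain ⟨g, hg⟩ := ih _ (card_isIndependent_insert_lt hL) _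
    ((forall_mem_insert L H (fun E => #E ≤ r)).2 ⟨hLr, hr⟩) rfl
  refine ⟨fun T => if L ⊆ T then f T else g T, fun I hI => ?_⟩
  by_cases hLI : L ⊆ I
  · exact .of_linkUnion hLr hcost.le hLI (fun T hT => if_pos hT)
      (hf I (isIndependent_linkUnion.2 (by rwa [union_eq_left.2 hLI])))
  · exact .of_insert hp₀ hp₁.le hLI (fun T hT => if_neg hT)
      (hg I (isIndependent_insert.2 ⟨hLI, hI⟩))

end Fingerprint

/-! ### Codegrees in stable hypergraphs -/

section Codegree

variable {V : Type*}

section ChungErdos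

variable [Fintype V]

theorem chungErdos_subsetProb {p : ℝ} (hp₀ : 0 ≤ p) (hp₁ : p ≤ 1) {ι : Type*} (s : Finset ι)
    {P : ι → Finset V → Prop} {Q : Finset V → Prop} (h : ∀ i ∈ s, ∀ R, P i R → Q R) :
    (∑ i ∈ s, subsetProb p (P i)) ^ 2 ≤
      subsetProb p Q * ∑ i ∈ s, ∑ j ∈ s, subsetProb p fun R => P i R ∧ P j R := by
  classical
  let X : Finset V → ℝ := fun R => ∑ i ∈ s, if P i R then 1 else 0
  have hX : ∀ R, ¬ Q R → X R = 0 := fun R hR =>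
    sum_eq_zero fun i hi => if_neg fun hi' => hR (h i hi R hi')
  have first_moment : ∑ i ∈ s, subsetProb p (P i) = ∑ R with Q R, bernoulliWeight p R * X R := by
    rw [sum_filter_of_ne fun R _ hR => not_not.1 fun hQ => hR (by rw [hX R hQ, mul_zero])]
    simp only [subsetProb, sum_filter, X, mul_sum, mul_ite, mul_one, mul_zero]
    exact sum_comm
  have second_moment : ∑ i ∈ s, ∑ j ∈ s, subsetProb p (fun R => P i R ∧ P j R) =
      ∑ R, bernoulliWeight p R * X R ^ 2 := by
    simp only [subsetProb, sum_filter]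
    rw [sum_comm_cycle]
    refine sum_congr rfl fun R _ => ?_
    rw [sq, sum_mul_sum, mul_sum]
    refine sum_congr rfl fun i _ => ?_
    rw [mul_sum]
    exact sum_congr rfl fun j _ => by by_cases P i R <;> by_cases P j R <;> simp [*]
  rw [first_moment, second_moment]
  refine (sum_sq_le_sum_mul_sum_of_sq_le_mul _ (f := fun R => bernoulliWeight p R)
    (g := fun R => bernoulliWeight p R * X R ^ 2)
    (fun R _ => bernoulliWeight_nonneg hp₀ hp₁ R)
    (fun R _ => mul_nonneg (bernoulliWeight_nonneg hp₀ hp₁ R) (sq_nonneg _))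
    (fun R _ => (by ring : _ = _).le)).trans ?_
  refine mul_le_mul_of_nonneg_left ?_ (subsetProb_nonneg hp₀ hp₁ Q)
  exact sum_le_sum_of_subset_of_nonneg (filter_subset _ _)
    fun R _ _ => mul_nonneg (bernoulliWeight_nonneg hp₀ hp₁ R) (sq_nonneg _)

end ChungErdos

open scoped Classical in
/-- The inclusion-minimal edges of the hypergraph `H`. -/
noncomputable def minimalEdges (H : Finset (Finset V)) : Finset (Finset V) :=
  {E ∈ H | Minimal (· ∈ H) E}

lemma mem_minimalEdges {H : Finset (Finset V)} {E : Finset V} :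
    E ∈ minimalEdges H ↔ Minimal (· ∈ H) E := by
  classical exact mem_filter.trans (and_iff_right_of_imp Minimal.prop)

lemma exists_mem_minimalEdges_subset {H : Finset (Finset V)} {E : Finset V} (hE : E ∈ H) :
    ∃ M ∈ minimalEdges H, M ⊆ E :=
  let ⟨M, hME, hM⟩ := H.finite_toSet.exists_le_minimal hE
  ⟨M, mem_minimalEdges.2 hM, hME⟩

lemma isIndependent_of_ssubset {H : Finset (Finset V)} {E T : Finset V} (hE : E ∈ minimalEdges H)
    (hT : T ⊂ E) : IsIndependent H T := fun _ hM hMT =>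
  (mem_minimalEdges.1 hE).not_prop_of_lt (hMT.trans_ssubset hT) hM

variable [DecidableEq V]

lemma card_filter_subset_le_sum_minimalEdges {Φ : Type*} [Fintype Φ] {e : Φ → Finset V}
    {G : Finset (Finset V)} (heG : ∀ φ, e φ ∈ G) (C : Finset V) :
    #{φ | e φ ⊆ C} ≤ ∑ E ∈ minimalEdges G with E ⊆ C, #{φ | E ⊆ e φ} := by
  classical
  refine (card_le_card fun φ hφ => ?_).trans card_biUnion_le
  obtain ⟨E, hE, hEφ⟩ := exists_mem_minimalEdges_subset (heG φ)
  simp only [mem_biUnion, mem_filter, mem_univ, true_and]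
  exact ⟨E, ⟨hE, hEφ.trans ((mem_filter_univ φ).1 hφ)⟩, hEφ⟩

/-- The degree of `T` in the hypergraph `H`, where the edge `E` has weight `p ^ #(E \ T)`: the
expected number of edges completed by adding the `p`-random subset to `T`. -/
def weightedDegree (p : ℝ) (H : Finset (Finset V)) (T : Finset V) : ℝ :=
  ∑ E ∈ H with T ⊆ E, p ^ #(E \ T)

lemma weightedDegree_nonneg {p : ℝ} (hp₀ : 0 ≤ p) (H : Finset (Finset V)) (T : Finset V) :
    0 ≤ weightedDegree p H T :=
  sum_nonneg fun _ _ => pow_nonneg hp₀ _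

lemma weightedDegree_minimalEdges_self (p : ℝ) {H : Finset (Finset V)} {E : Finset V}
    (hE : E ∈ minimalEdges H) : weightedDegree p (minimalEdges H) E = 1 := by
  have hfilter : {M ∈ minimalEdges H | E ⊆ M} = {E} := by
    refine eq_singleton_iff_unique_mem.2 ⟨mem_filter.2 ⟨hE, Subset.rfl⟩, fun M hM => ?_⟩
    obtain ⟨hM, hEM⟩ := mem_filter.1 hM
    exact ((mem_minimalEdges.1 hM).eq_of_le (mem_minimalEdges.1 hE).prop hEM).symm
  simp [weightedDegree, hfilter]

lemma weightedDegree_eq_zero (p : ℝ) {r : ℕ} {H : Finset (Finset V)} (hr : ∀ E ∈ H, #E ≤ r)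
    {T : Finset V} (hT : T ∉ H) (hTr : r ≤ #T) : weightedDegree p H T = 0 := by
  refine sum_eq_zero fun E hE => absurd ?_ hT
  obtain ⟨hE, hTE⟩ := mem_filter.1 hE
  rwa [eq_of_subset_of_card_le hTE ((hr E hE).trans hTr)]

lemma sum_pow_card_sdiff_le {p : ℝ} (hp₀ : 0 ≤ p) (H : Finset (Finset V)) {T E : Finset V}
    (hTE : T ⊆ E) :
    ∑ M ∈ H with T ⊆ M, p ^ #(M \ E) ≤ ∑ J ∈ Icc T E, weightedDegree p H J := by
  calc ∑ M ∈ H with T ⊆ M, p ^ #(M \ E)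
      ≤ ∑ M ∈ H with T ⊆ M, ∑ J ∈ Icc T E with J ⊆ M, p ^ #(M \ J) := by
        refine sum_le_sum fun M hM => ?_
        have hmem : E ∩ M ∈ {J ∈ Icc T E | J ⊆ M} := by
          simp [subset_inter hTE (mem_filter.1 hM).2]
        simpa only [sdiff_inter_self_right] using
          single_le_sum (f := fun J => p ^ #(M \ J)) (fun J _ => pow_nonneg hp₀ _) hmem
    _ = ∑ J ∈ Icc T E, weightedDegree p H J := by
        refine sum_comm' fun M J => ?_
        simp only [mem_filter, mem_Icc]
        exact ⟨fun h => ⟨⟨h.1.1, h.2.2⟩, h.2.1⟩,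
          fun h => ⟨⟨h.1.1, h.2.1.trans h.1.2⟩, h.2, h.1.2⟩⟩

lemma sum_pow_card_sdiff_union_sdiff_le {p : ℝ} (hp₀ : 0 ≤ p) {r : ℕ} {H : Finset (Finset V)}
    (hr : ∀ E ∈ H, #E ≤ r) {T : Finset V} {K : ℝ} (hK : 1 ≤ K)
    (hdeg : ∀ J, T ⊂ J → IsIndependent H J → weightedDegree p (minimalEdges H) J ≤ K)
    {E : Finset V} (hE : E ∈ minimalEdges H) (hTE : T ⊆ E) :
    ∑ M ∈ minimalEdges H with T ⊆ M, p ^ #((E \ T) ∪ (M \ T)) ≤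
      p ^ #(E \ T) * (weightedDegree p (minimalEdges H) T + 2 ^ r * K) := by
  have hpow : ∀ M, p ^ #((E \ T) ∪ (M \ T)) = p ^ #(E \ T) * p ^ #(M \ E) := fun M => by
    have hunion : (E \ T) ∪ (M \ T) = (E \ T) ∪ (M \ E) := by
      ext x
      have := @hTE x
      simp only [mem_union, mem_sdiff]
      tauto
    rw [hunion, card_union_of_disjoint (disjoint_sdiff.mono_left sdiff_subset), pow_add]
  have hle : ∀ J ∈ Ioc T E, weightedDegree p (minimalEdges H) J ≤ K := fun J hJ => by
    obtain ⟨hTJ, hJE⟩ := mem_Ioc.1 hJ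
    obtain rfl | hJE := hJE.eq_or_ssubset
    · rwa [weightedDegree_minimalEdges_self p hE]
    · exact hdeg J hTJ (isIndependent_of_ssubset hE hJE)
  have hcard : #(Ioc T E) ≤ 2 ^ r := by
    rw [card_Ioc_finset hTE]
    exact (Nat.sub_le _ _).trans (Nat.pow_le_pow_right two_pos
      ((Nat.sub_le _ _).trans (hr E (mem_minimalEdges.1 hE).prop)))
  simp only [hpow, ← mul_sum]
  gcongr
  calc ∑ M ∈ minimalEdges H with T ⊆ M, p ^ #(M \ E)
      ≤ ∑ J ∈ Icc T E, weightedDegree p (minimalEdges H) J := sum_pow_card_sdiff_le hp₀ _ hTE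
    _ = weightedDegree p (minimalEdges H) T +
          ∑ J ∈ Ioc T E, weightedDegree p (minimalEdges H) J := by
        rw [← Ioc_insert_left hTE, sum_insert left_notMem_Ioc]
    _ ≤ weightedDegree p (minimalEdges H) T + 2 ^ r * K := by
        gcongr
        calc ∑ J ∈ Ioc T E, weightedDegree p (minimalEdges H) J
            ≤ #(Ioc T E) • K := sum_le_card_nsmul _ _ _ hle
          _ ≤ 2 ^ r * K := by
              rw [nsmul_eq_mul]
              gcongr
              exact_mod_cast hcard

variable [Fintype V]

lemma subsetProb_isIndependent_and_subset (p : ℝ) (H : Finset (Finset V)) (L : Finset V) :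
    subsetProb p (fun R => IsIndependent H R ∧ L ⊆ R) = p ^ #L * indepProb p H L :=
  subsetProb_and_subset p _ L

lemma subsetProb_isIndependent_and_not (p : ℝ) (H : Finset (Finset V)) (L : Finset V) :
    subsetProb p (fun R => IsIndependent H R ∧ ¬ IsIndependent H (R ∪ L)) =
      indepProb p H ∅ - indepProb p H L := by
  have h := subsetProb_and_add_and_not p (IsIndependent H) fun R => IsIndependent H (R ∪ L)
  simp only [indepProb, union_empty, ← h]
  have : ∀ R, IsIndependent H R ∧ IsIndependent H (R ∪ L) ↔ IsIndependent H (R ∪ L) :=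
    fun R => and_iff_right_of_imp fun hR => hR.mono subset_union_left
  simp only [this, add_sub_cancel_left]

lemma sum_subsetProb_isIndependent_and_subset_le {p : ℝ} (hp₀ : 0 ≤ p) (hp₁ : p ≤ 1) {r : ℕ}
    {H : Finset (Finset V)} (hr : ∀ E ∈ H, #E ≤ r) {T : Finset V} {K : ℝ} (hK : 1 ≤ K)
    (hdeg : ∀ J, T ⊂ J → IsIndependent H J → weightedDegree p (minimalEdges H) J ≤ K) :
    ∑ E ∈ minimalEdges H with T ⊆ E, ∑ M ∈ minimalEdges H with T ⊆ M,
        subsetProb p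
          (fun R => (IsIndependent H R ∧ E \ T ⊆ R) ∧ IsIndependent H R ∧ M \ T ⊆ R) ≤
      indepProb p H ∅ * (weightedDegree p (minimalEdges H) T *
        (weightedDegree p (minimalEdges H) T + 2 ^ r * K)) := by
  set Z := indepProb p H ∅
  set μ := weightedDegree p (minimalEdges H) T with hμ
  have hZ₀ : 0 ≤ Z := subsetProb_nonneg hp₀ hp₁ _
  simp only [← and_and_left, ← union_subset_iff, subsetProb_isIndependent_and_subset]
  calc _ ≤ ∑ E ∈ minimalEdges H with T ⊆ E, ∑ M ∈ minimalEdges H with T ⊆ M,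
          p ^ #((E \ T) ∪ (M \ T)) * Z := by
        gcongr
        exact indepProb_anti hp₀ hp₁ H (empty_subset _)
    _ ≤ ∑ E ∈ minimalEdges H with T ⊆ E, p ^ #(E \ T) * (μ + 2 ^ r * K) * Z := by
        refine sum_le_sum fun E hE => ?_
        rw [← sum_mul]
        gcongr
        exact sum_pow_card_sdiff_union_sdiff_le hp₀ hr hK hdeg (mem_filter.1 hE).1
          (mem_filter.1 hE).2
    _ = Z * (μ * (μ + 2 ^ r * K)) := by
        rw [← sum_mul, ← sum_mul, hμ, weightedDegree, mul_comm]

lemma indepProb_mul_weightedDegree_sq_le {p : ℝ} (hp₀ : 0 ≤ p) (hp₁ : p ≤ 1) {r : ℕ}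
    {H : Finset (Finset V)} (hH : IsStable p r H) (hr : ∀ E ∈ H, #E ≤ r) {T : Finset V}
    (hne : T.Nonempty) {K : ℝ} (hK : 1 ≤ K)
    (hdeg : ∀ J, T ⊂ J → IsIndependent H J → weightedDegree p (minimalEdges H) J ≤ K) :
    (3 / 4 * indepProb p H ∅ * weightedDegree p (minimalEdges H) T) ^ 2 ≤
      (indepProb p H ∅ - indepProb p H T) *
        (indepProb p H ∅ * (weightedDegree p (minimalEdges H) T *
          (weightedDegree p (minimalEdges H) T + 2 ^ r * K))) := by
  set Z := indepProb p H ∅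
  set μ := weightedDegree p (minimalEdges H) T with hμ
  have hZ₀ : 0 ≤ Z := subsetProb_nonneg hp₀ hp₁ _
  have hμ₀ : 0 ≤ μ := weightedDegree_nonneg hp₀ _ _
  have first_moment : 3 / 4 * Z * μ ≤ ∑ E ∈ minimalEdges H with T ⊆ E,
      subsetProb p fun R => IsIndependent H R ∧ E \ T ⊆ R := by
    rw [hμ, weightedDegree, mul_sum]
    refine sum_le_sum fun E hE => ?_
    obtain ⟨hE, hTE⟩ := mem_filter.1 hE
    rw [subsetProb_isIndependent_and_subset, mul_comm]
    gcongr
    exact hH _ ((card_le_card sdiff_subset).trans (hr E (mem_minimalEdges.1 hE).prop))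
      (isIndependent_of_ssubset hE (sdiff_ssubset hTE hne))
  rw [← subsetProb_isIndependent_and_not]
  refine (pow_le_pow_left₀ (by positivity) first_moment 2).trans
    ((chungErdos_subsetProb hp₀ hp₁ _ fun E hE R hR => ⟨hR.1, fun hRT => ?_⟩).trans
      (mul_le_mul_of_nonneg_left (sum_subsetProb_isIndependent_and_subset_le hp₀ hp₁ hr hK hdeg)
        (subsetProb_nonneg hp₀ hp₁ _)))
  obtain ⟨hE, -⟩ := mem_filter.1 hE
  exact hRT E (mem_minimalEdges.1 hE).prop (by rw [union_comm]; exact sdiff_le_iff.1 hR.2)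

-- `R ∪ T` contains an edge for at most a quarter of the independent `R`, so the number of minimal
-- edges it contains cannot have a large mean unless its second moment is large.
lemma IsStable.weightedDegree_le {p : ℝ} (hp₀ : 0 ≤ p) (hp₁ : p < 1) {r : ℕ}
    {H : Finset (Finset V)} (hH : IsStable p r H) (hr : ∀ E ∈ H, #E ≤ r) {T : Finset V}
    (hne : T.Nonempty) (hT : IsIndependent H T) (hTr : #T ≤ r) {K : ℝ} (hK : 1 ≤ K)
    (hdeg : ∀ J, T ⊂ J → IsIndependent H J → weightedDegree p (minimalEdges H) J ≤ K) :
    weightedDegree p (minimalEdges H) T ≤ 2 ^ r * K := by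
  have hsq := indepProb_mul_weightedDegree_sq_le hp₀ hp₁.le hH hr hne hK hdeg
  set Z := indepProb p H ∅
  set μ := weightedDegree p (minimalEdges H) T
  have hZ : 0 < Z := indepProb_empty_pos hp₀ hp₁ (hT.mono (empty_subset T))
  have hμ₀ : 0 ≤ μ := weightedDegree_nonneg hp₀ _ _
  have hcost : Z - indepProb p H T ≤ Z / 4 := by linarith [hH T hTr hT]
  have hquad : μ * (9 / 4 * μ) ≤ μ * (μ + 2 ^ r * K) := by
    refine le_of_mul_le_mul_left ?_ (show 0 < Z ^ 2 / 4 by positivity)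
    calc Z ^ 2 / 4 * (μ * (9 / 4 * μ)) = (3 / 4 * Z * μ) ^ 2 := by ring
      _ ≤ Z / 4 * (Z * (μ * (μ + 2 ^ r * K))) := hsq.trans (by gcongr)
      _ = Z ^ 2 / 4 * (μ * (μ + 2 ^ r * K)) := by ring
  obtain hμ | hμ := hμ₀.eq_or_lt
  · rw [← hμ]
    positivity
  · linarith [le_of_mul_le_mul_left hquad hμ]

theorem IsStable.weightedDegree_le_pow {p : ℝ} (hp₀ : 0 ≤ p) (hp₁ : p < 1) {r : ℕ}
    {H : Finset (Finset V)} (hH : IsStable p r H) (hr : ∀ E ∈ H, #E ≤ r) (j : ℕ) {T : Finset V}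
    (hne : T.Nonempty) (hT : IsIndependent H T) (hj : r ≤ #T + j) :
    weightedDegree p (minimalEdges H) T ≤ (2 ^ r) ^ j := by
  have hzero : ∀ {J : Finset V}, IsIndependent H J → r ≤ #J →
      weightedDegree p (minimalEdges H) J = 0 := fun hJ =>
    weightedDegree_eq_zero p (fun E hE => hr E (mem_minimalEdges.1 hE).prop)
      fun hJH => hJ _ (mem_minimalEdges.1 hJH).prop Subset.rfl
  induction j generalizing T with
  | zero => exact (hzero hT hj).trans_le (by positivity)
  | succ j ih =>
    obtain hr' | hr' := le_total r #T
    · exact (hzero hT hr').trans_le (by positivity)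
    rw [pow_succ']
    refine hH.weightedDegree_le hp₀ hp₁ hr hne hT hr' (one_le_pow₀ (one_le_pow₀ one_le_two))
      fun J hTJ hJ => ih (hne.mono hTJ.subset) hJ ?_
    have := card_lt_card hTJ
    omega

end Codegree

/-! ### Hypergraph containers -/

section Container

variable {V : Type*} [Fintype V]

lemma natCast_le_of_one_sub_pow_le {p : ℝ} (hp₀ : 0 ≤ p) (hp : p ≤ 1 / 2) {m k : ℕ}
    (h : (1 - p) ^ m ≤ (3 / 4) ^ k) : (k : ℝ) ≤ 8 * p * m := by
  have hp' : 0 < 1 - p := by linarith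
  have hlog : m * Real.log (1 - p) ≤ k * Real.log (3 / 4) := by
    simpa only [Real.log_pow] using Real.log_le_log (pow_pos hp' m) h
  have upper : Real.log (3 / 4) ≤ -(1 / 4) :=
    (Real.log_le_sub_one_of_pos (by norm_num)).trans_eq (by norm_num)
  have lower : -(2 * p) ≤ Real.log (1 - p) := by
    have hinv : (1 - p)⁻¹ ≤ 1 + 2 * p := by
      rw [inv_le_iff_one_le_mul₀ hp']
      nlinarith
    linarith [Real.one_sub_inv_le_log_of_pos hp']
  have := mul_le_mul_of_nonneg_left upper k.cast_nonneg
  have := mul_le_mul_of_nonneg_left lower m.cast_nonneg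
  linarith

open scoped Classical in
/-- The container defined by the hypergraph `G`: the vertices that do not form an edge of `G` by
themselves. It contains every independent set of `G`. -/
noncomputable def container (G : Finset (Finset V)) : Finset V :=
  {v | IsIndependent G {v}}

lemma mem_container {G : Finset (Finset V)} {v : V} :
    v ∈ container G ↔ IsIndependent G {v} := by
  classical exact mem_filter_univ v

lemma IsIndependent.subset_container {G : Finset (Finset V)} {I : Finset V}
    (hI : IsIndependent G I) : I ⊆ container G := fun _ hv =>
  mem_container.2 (hI.mono (singleton_subset_iff.2 hv))

lemma two_le_card_of_subset_container {G : Finset (Finset V)} (hG : IsIndependent G ∅)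
    {E : Finset V} (hE : E ∈ G) (hEC : E ⊆ container G) : 2 ≤ #E := by
  by_contra! hlt
  obtain h | h : #E = 0 ∨ #E = 1 := by omega
  · exact hG E hE (card_eq_zero.1 h).subset
  · obtain ⟨v, rfl⟩ := card_eq_one.1 h
    exact mem_container.1 (hEC (mem_singleton_self v)) _ hE Subset.rfl

variable [DecidableEq V]

lemma IsStable.sum_pow_card_sub_one_le {p : ℝ} (hp₀ : 0 ≤ p) (hp₁ : p < 1) {r : ℕ}
    {G : Finset (Finset V)} (hG : IsStable p r G) (hr : ∀ E ∈ G, #E ≤ r)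
    (hind : IsIndependent G ∅) :
    ∑ E ∈ minimalEdges G with E ⊆ container G, p ^ (#E - 1) ≤
      (2 ^ r) ^ r * Fintype.card V := by
  have hdeg : ∀ v ∈ container G, weightedDegree p (minimalEdges G) {v} ≤ (2 ^ r) ^ r :=
    fun v hv => hG.weightedDegree_le_pow hp₀ hp₁ hr r (singleton_nonempty v)
      (mem_container.1 hv) (Nat.le_add_left _ _)
  calc ∑ E ∈ minimalEdges G with E ⊆ container G, p ^ (#E - 1)
      ≤ ∑ E ∈ minimalEdges G with E ⊆ container G,
          ∑ v ∈ container G with {v} ⊆ E, p ^ #(E \ {v}) := by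
        refine sum_le_sum fun E hE => ?_
        obtain ⟨hE, hEC⟩ := mem_filter.1 hE
        have hcard := two_le_card_of_subset_container hind (mem_minimalEdges.1 hE).prop hEC
        obtain ⟨v, hv⟩ := card_pos.1 (two_pos.trans_le hcard)
        rw [← card_singleton v, ← card_sdiff_of_subset (singleton_subset_iff.2 hv)]
        exact single_le_sum (f := fun v => p ^ #(E \ {v})) (fun _ _ => pow_nonneg hp₀ _)
          (mem_filter.2 ⟨hEC hv, singleton_subset_iff.2 hv⟩)
    _ ≤ ∑ E ∈ minimalEdges G, ∑ v ∈ container G with {v} ⊆ E, p ^ #(E \ {v}) :=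
        sum_le_sum_of_subset_of_nonneg (filter_subset _ _)
          fun _ _ _ => sum_nonneg fun _ _ => pow_nonneg hp₀ _
    _ = ∑ v ∈ container G, weightedDegree p (minimalEdges G) {v} :=
        sum_comm' fun E v => by simp only [mem_filter]; tauto
    _ ≤ #(container G) • (2 ^ r) ^ r := sum_le_card_nsmul _ _ _ hdeg
    _ ≤ (2 ^ r) ^ r * Fintype.card V := by
        rw [nsmul_eq_mul, mul_comm]
        gcongr
        exact card_le_univ _

variable {Φ : Type*} [Fintype Φ]

lemma IsStable.card_filter_subset_container_le {q A D : ℝ} (hq : 0 ≤ q) (hA : 1 ≤ A) (hD : 0 ≤ D)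
    (hp : A * q < 1) {r : ℕ} {e : Φ → Finset V}
    (hcodeg : ∀ J : Finset V, 2 ≤ #J → (#{φ | J ⊆ e φ} : ℝ) ≤ D * q ^ (#J - 1))
    {G : Finset (Finset V)} (hG : IsStable (A * q) r G) (hr : ∀ E ∈ G, #E ≤ r)
    (hind : IsIndependent G ∅) (heG : ∀ φ, e φ ∈ G) :
    (#{φ | e φ ⊆ container G} : ℝ) ≤ D / A * ((2 ^ r) ^ r * Fintype.card V) := by
  have hA₀ : 0 < A := one_pos.trans_le hA
  have hedge : ∀ E ∈ {E ∈ minimalEdges G | E ⊆ container G},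
      (#{φ | E ⊆ e φ} : ℝ) ≤ D / A * (A * q) ^ (#E - 1) := fun E hE => by
    obtain ⟨hE, hEC⟩ := mem_filter.1 hE
    have hcard := two_le_card_of_subset_container hind (mem_minimalEdges.1 hE).prop hEC
    calc (#{φ | E ⊆ e φ} : ℝ) ≤ D / A * (A * q ^ (#E - 1)) := by
          rw [div_mul_eq_mul_div, mul_left_comm, mul_div_cancel_left₀ _ hA₀.ne']
          exact hcodeg E hcard
      _ ≤ D / A * (A * q) ^ (#E - 1) := by
          rw [mul_pow]
          gcongr
          exact le_self_pow₀ hA (by omega)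
  calc (#{φ | e φ ⊆ container G} : ℝ)
      ≤ ∑ E ∈ minimalEdges G with E ⊆ container G, (#{φ | E ⊆ e φ} : ℝ) := by
        exact_mod_cast card_filter_subset_le_sum_minimalEdges heG (container G)
    _ ≤ D / A * ∑ E ∈ minimalEdges G with E ⊆ container G, (A * q) ^ (#E - 1) := by
        rw [mul_sum]
        exact sum_le_sum hedge
    _ ≤ D / A * ((2 ^ r) ^ r * Fintype.card V) := by
        gcongr
        exact hG.sum_pow_card_sub_one_le (by positivity) hp hr hind

theorem exists_forall_subset_container {q A D : ℝ} (hq : 0 ≤ q) (hA : 1 ≤ A) (hD : 0 ≤ D)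
    (hp : A * q ≤ 1 / 2) {r : ℕ} (e : Φ → Finset V) (hr : ∀ φ, #(e φ) ≤ r)
    (hcodeg : ∀ J : Finset V, 2 ≤ #J → (#{φ | J ⊆ e φ} : ℝ) ≤ D * q ^ (#J - 1)) :
    ∃ C : Finset V → Finset V, ∀ I, (∀ φ, ¬ e φ ⊆ I) → ∃ S ⊆ I,
      (#S : ℝ) ≤ r * (8 * (A * q) * Fintype.card V) ∧ I ⊆ C S ∧
      (#{φ | e φ ⊆ C S} : ℝ) ≤ D / A * ((2 ^ r) ^ r * Fintype.card V) := by
  have hp₀ : 0 ≤ A * q := by positivity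
  have hp₁ : A * q < 1 := by linarith
  have he : ∀ φ, e φ ∈ univ.image e := fun φ => mem_image_of_mem e (mem_univ φ)
  obtain ⟨f, hf⟩ := exists_forall_hasFingerprint hp₀ hp₁ (univ.image e)
    (forall_mem_image.2 fun φ _ => hr φ)
  refine ⟨fun S => container (f S), fun I hI => ?_⟩
  obtain ⟨S, hSI, k, hSk, hk, hext⟩ := hf I (forall_mem_image.2 fun φ _ => hI φ)
  obtain ⟨hstable, hsub, hcard, hind⟩ := hext S Subset.rfl hSI
  refine ⟨S, hSI, ?_, hind.subset_container, hstable.card_filter_subset_container_le hq hA hD hp₁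
    hcodeg hcard (hind.mono (empty_subset I)) fun φ => hsub (he φ)⟩
  calc (#S : ℝ) ≤ r * k := by exact_mod_cast hSk
    _ ≤ r * (8 * (A * q) * Fintype.card V) := by
        gcongr
        refine natCast_le_of_one_sub_pow_le hp₀ hp (hk.trans ?_)
        exact mul_le_of_le_one_right (by positivity) (indepProb_le_one hp₀ hp₁.le _ _)

end Container

/-! ### The 2-density of a digraph -/

section Density

variable {β : Type*}

lemma RelAcyclic.asymm {F : β → β → Prop} (hF : RelAcyclic F) {a b : β} (h : F a b) : ¬ F b a :=
  fun h' => hF a ((Relation.TransGen.single h).tail h')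

lemma RelAcyclic.ne {F : β → β → Prop} (hF : RelAcyclic F) {a b : β} (h : F a b) : a ≠ b := by
  rintro rfl
  exact hF.asymm h h

lemma RelAcyclic.injOn_sym2Mk {F : β → β → Prop} (hF : RelAcyclic F) {A : Set (β × β)}
    (hA : ∀ a ∈ A, F a.1 a.2) : Set.InjOn (fun a => s(a.1, a.2)) A := by
  rintro a ha b hb hab
  obtain h | ⟨h₁, h₂⟩ := Sym2.eq_iff.1 hab
  · exact Prod.ext h.1 h.2
  · exact absurd (hA a ha) (hF.asymm (by simpa only [h₁, h₂] using hA b hb))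

lemma d2_le_m2 [Fintype β] {H : SimpleGraph β} (J : H.Subgraph) :
    d2 J.verts.ncard J.edgeSet.ncard ≤ m2 H := by
  refine le_csSup (Set.Finite.bddAbove ?_) ⟨J, rfl⟩
  refine (Set.finite_range fun J : H.Subgraph => d2 J.verts.ncard J.edgeSet.ncard).subset ?_
  rintro x ⟨J, rfl⟩
  exact ⟨J, rfl⟩

variable [DecidableEq β]

/-- The set of vertices incident with a set `A` of arcs. -/
def endpoints (A : Finset (β × β)) : Finset β := A.image Prod.fst ∪ A.image Prod.snd

lemma fst_mem_endpoints {A : Finset (β × β)} {a : β × β} (ha : a ∈ A) : a.1 ∈ endpoints A :=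
  mem_union_left _ (mem_image_of_mem _ ha)

lemma snd_mem_endpoints {A : Finset (β × β)} {a : β × β} (ha : a ∈ A) : a.2 ∈ endpoints A :=
  mem_union_right _ (mem_image_of_mem _ ha)

lemma RelAcyclic.three_le_card_endpoints {F : β → β → Prop} (hF : RelAcyclic F)
    {A : Finset (β × β)} (hA : ∀ a ∈ A, F a.1 a.2) (hcard : 2 ≤ #A) : 3 ≤ #(endpoints A) := by
  have hsub : A.image (fun a => s(a.1, a.2)) ⊆ (endpoints A).offDiag.image (fun a => s(a.1, a.2)) :=
    image_subset_image fun a ha => mem_offDiag.2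
      ⟨fst_mem_endpoints ha, snd_mem_endpoints ha, hF.ne (hA a ha)⟩
  have hle : #A ≤ (#(endpoints A)).choose 2 := by
    rw [← card_image_of_injOn (hF.injOn_sym2Mk hA), ← Sym2.card_image_offDiag]
    exact card_le_card hsub
  by_contra! h
  have : (#(endpoints A)).choose 2 ≤ Nat.choose 2 2 := Nat.choose_le_choose 2 (by omega)
  rw [Nat.choose_self] at this
  omega

lemma RelAcyclic.card_sub_one_le_m2Rel_mul [Fintype β] {F : β → β → Prop} (hF : RelAcyclic F)
    {A : Finset (β × β)} (hA : ∀ a ∈ A, F a.1 a.2) (hcard : 2 ≤ #A) :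
    (#A - 1 : ℝ) ≤ m2Rel F * (#(endpoints A) - 2) := by
  let J : (SimpleGraph.fromRel F).Subgraph :=
    { verts := endpoints A
      Adj := fun a b => (a, b) ∈ A ∨ (b, a) ∈ A
      adj_sub := by
        rintro a b (h | h)
        · exact ⟨hF.ne (hA _ h), .inl (hA _ h)⟩
        · exact ⟨(hF.ne (hA _ h)).symm, .inr (hA _ h)⟩
      edge_vert := by
        rintro a b (h | h)
        · exact fst_mem_endpoints h
        · exact snd_mem_endpoints h
      symm := ⟨fun a b => Or.symm⟩ }
  have hedges : J.edgeSet = (fun a => s(a.1, a.2)) '' (A : Set (β × β)) := by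
    ext e
    induction e with | _ a b
    rw [SimpleGraph.Subgraph.mem_edgeSet]
    constructor
    · rintro (h | h)
      · exact ⟨_, h, rfl⟩
      · exact ⟨_, h, Sym2.eq_swap⟩
    · rintro ⟨c, hc, hcab⟩
      obtain ⟨rfl, rfl⟩ | ⟨rfl, rfl⟩ := Sym2.eq_iff.1 hcab
      · exact .inl hc
      · exact .inr hc
  have hd2 := d2_le_m2 J
  have h3 := hF.three_le_card_endpoints hA hcard
  rw [hedges, (hF.injOn_sym2Mk hA).ncard_image, Set.ncard_coe_finset,
    Set.ncard_coe_finset, d2, if_pos h3, div_le_iff₀ (sub_pos.2 (by exact_mod_cast h3))] at hd2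
  exact hd2

end Density

/-! ### Supersaturation for acyclic digraphs -/

section Ramsey

variable {α β : Type*}

lemma exists_nodup_pairwise_of_two_pow_le_card {o : α → α → Prop}
    (ho : ∀ a b, a ≠ b → o a b ∨ o b a) {k : ℕ} {s : Finset α} (hs : 2 ^ k ≤ #s) :
    ∃ l : List α, l.length = k ∧ (∀ x ∈ l, x ∈ s) ∧ l.Nodup ∧ l.Pairwise o := by
  classical
  induction k generalizing s with
  | zero => exact ⟨[], by simp⟩
  | succ k ih =>
    obtain ⟨v, hv⟩ := card_pos.1 (lt_of_lt_of_le (by positivity) hs)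
    have hsplit : 2 ^ k ≤ #{x ∈ s.erase v | o v x} ∨ 2 ^ k ≤ #{x ∈ s.erase v | ¬ o v x} := by
      have h₁ := card_erase_add_one hv
      have h₂ : #{x ∈ s.erase v | o v x} + #{x ∈ s.erase v | ¬ o v x} = #(s.erase v) :=
        card_filter_add_card_filter_not _
      rw [pow_succ] at hs
      omega
    rcases hsplit with hout | hin
    · obtain ⟨l, hlen, hmem, hnodup, hl⟩ := ih hout
      simp only [mem_filter, mem_erase] at hmem
      exact ⟨v :: l, by simp [hlen], List.forall_mem_cons.2 ⟨hv, fun x hx => (hmem x hx).1.2⟩,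
        List.nodup_cons.2 ⟨fun h => (hmem v h).1.1 rfl, hnodup⟩,
        List.pairwise_cons.2 ⟨fun x hx => (hmem x hx).2, hl⟩⟩
    · obtain ⟨l, hlen, hmem, hnodup, hl⟩ := ih hin
      simp only [mem_filter, mem_erase] at hmem
      refine ⟨l.concat v, by simp [hlen], ?_, hnodup.concat fun h => (hmem v h).1.1 rfl, ?_⟩
      · simp only [List.concat_eq_append, List.mem_append, List.mem_singleton]
        rintro x (hx | rfl)
        exacts [(hmem x hx).1.2, hv]
      · simp only [List.concat_eq_append, List.pairwise_append, List.pairwise_singleton,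
          List.mem_singleton, forall_eq]
        exact ⟨hl, trivial, fun x hx => (ho x v (hmem x hx).1.1).resolve_right (hmem x hx).2⟩

lemma RelAcyclic.exists_equiv_fin [Fintype β] {F : β → β → Prop} (hF : RelAcyclic F) :
    ∃ t : β ≃ Fin (Fintype.card β), ∀ a b, F a b → t a < t b := by
  let _ : PartialOrder β :=
    { le := Relation.ReflTransGen F
      le_refl := fun _ => .refl
      le_trans := fun _ _ _ => .trans
      le_antisymm := fun a b hab hba => by
        rcases Relation.reflTransGen_iff_eq_or_transGen.1 hab with h | h
        · exact h.symm
        · exact absurd (h.trans_left hba) (hF a) }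
  let _ : Fintype (LinearExtension β) := inferInstanceAs (Fintype β)
  let e := (Fintype.orderIsoFinOfCardEq (LinearExtension β) rfl).symm
  refine ⟨e.toEquiv, fun a b h => e.strictMono (lt_of_le_of_ne ?_ (hF.ne h))⟩
  exact toLinearExtension.monotone (Relation.ReflTransGen.single h : Relation.ReflTransGen F a b)

theorem RelAcyclic.hasCopy_of_two_pow_le_card [Fintype α] [Fintype β] {F : β → β → Prop}
    (hF : RelAcyclic F) (hcard : 2 ^ Fintype.card β ≤ Fintype.card α) {o : α → α → Prop}
    (ho : ∀ a b, a ≠ b → o a b ∨ o b a) : HasCopy o F := by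
  obtain ⟨l, hlen, -, hnodup, hl⟩ := exists_nodup_pairwise_of_two_pow_le_card ho (s := univ) hcard
  obtain ⟨t, ht⟩ := hF.exists_equiv_fin
  refine ⟨fun b => l.get ((t b).cast hlen.symm), ?_, fun a b h => ?_⟩
  · exact (List.nodup_iff_injective_get.1 hnodup).comp
      ((Fin.cast_injective _).comp t.injective)
  · exact List.pairwise_iff_get.1 hl _ _ (ht a b h)

end Ramsey

section Supersaturation

variable {α β ρ κ : Type*}

open scoped Classical in
/-- The arcs of the digraph `F`. -/
noncomputable def arcs [Fintype β] (F : β → β → Prop) : Finset (β × β) := {a | F a.1 a.2}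

lemma mem_arcs [Fintype β] {F : β → β → Prop} {a : β × β} : a ∈ arcs F ↔ F a.1 a.2 := by
  classical exact mem_filter_univ _

/-- The arcs of the copy of `F` with vertex map `f`. -/
noncomputable def copyArcs [Fintype β] (F : β → β → Prop) (f : β ↪ α) : Finset (α × α) :=
  (arcs F).map (f.prodMap f)

lemma copyArcs_subset_iff [Fintype β] {F : β → β → Prop} {f : β ↪ α} {C : Finset (α × α)} :
    copyArcs F f ⊆ C ↔ ∀ a b, F a b → (f a, f b) ∈ C := by
  rw [copyArcs, map_subset_iff_subset_preimage]
  simp only [subset_iff, mem_preimage, mem_arcs, Prod.forall, Function.Embedding.coe_prodMap,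
    Prod.map_apply]

/-- The pairs of distinct vertices which are joined by no arc of `C` in either direction. -/
def missedPairs [Fintype α] [DecidableEq α] (C : Finset (α × α)) : Finset (Sym2 α) :=
  {e | ¬ e.IsDiag ∧ e ∉ C.image fun a => s(a.1, a.2)}

lemma mk_mem_missedPairs [Fintype α] [DecidableEq α] {C : Finset (α × α)} {x y : α} :
    s(x, y) ∈ missedPairs C ↔ x ≠ y ∧ (x, y) ∉ C ∧ (y, x) ∉ C := by
  simp only [missedPairs, mem_filter_univ, Sym2.mk_isDiag_iff, mem_image, Prod.exists, Sym2.eq_iff]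
  grind

lemma RelAcyclic.exists_comp_eq_of_two_pow_le_card [Fintype α] [DecidableEq α] [Fintype β]
    [Fintype ρ] {F : β → β → Prop} (hF : RelAcyclic F)
    (hρ : 2 ^ Fintype.card β ≤ Fintype.card ρ) (C : Finset (α × α)) (g : ρ → α) :
    (∃ h : Fin 2 ↪ ρ, s(g (h 0), g (h 1)) ∈ univ.image Sym2.diag ∪ missedPairs C) ∨
      ∃ h : β ↪ ρ, ∃ f : β ↪ α, g ∘ h = f ∧ copyArcs F f ⊆ C := by
  refine or_iff_not_imp_left.2 fun hpair => ?_
  have hgood : ∀ x y, x ≠ y → g x ≠ g y ∧ ((g x, g y) ∈ C ∨ (g y, g x) ∈ C) := by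
    intro x y hxy
    have hxy' := not_exists.1 hpair ⟨![x, y], injective_pair_iff_ne.2 hxy⟩
    simp only [Function.Embedding.coeFn_mk, Matrix.cons_val_zero, Matrix.cons_val_one, mem_union,
      mk_mem_missedPairs, mem_image, mem_univ, true_and, not_or, not_exists] at hxy'
    have hne : g x ≠ g y := fun h => hxy'.1 (g x) (by rw [Sym2.diag, h])
    exact ⟨hne, by tauto⟩
  obtain ⟨h, hinj, hcopy⟩ := hF.hasCopy_of_two_pow_le_card hρ fun x y hxy => (hgood x y hxy).2
  have hg : Function.Injective g := fun x y hxy => by_contra fun hne => (hgood x y hne).1 hxy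
  exact ⟨⟨h, hinj⟩, ⟨g ∘ h, hg.comp hinj⟩, rfl, copyArcs_subset_iff.2 hcopy⟩

variable [Fintype α] [DecidableEq α]

section Counting

variable [Fintype ρ]

lemma card_filter_comp_mem_le [DecidableEq ρ] [Fintype κ] (h : κ ↪ ρ) (X : Finset (κ → α)) :
    #{g : ρ → α | g ∘ h ∈ X} ≤ #X * Fintype.card α ^ (Fintype.card ρ - Fintype.card κ) := by
  have hcard : Fintype.card α ^ (Fintype.card ρ - Fintype.card κ) =
      #(univ : Finset ({x // x ∉ univ.map h} → α)) := by
    rw [card_univ, Fintype.card_fun, Fintype.card_subtype_compl, Fintype.card_coe, card_map,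
      card_univ]
  rw [hcard, ← card_product]
  refine card_le_card_of_injOn (fun g => (g ∘ h, fun x => g x)) (fun g hg => ?_)
    fun g _ g' _ hg => ?_
  · exact mem_product.2 ⟨(mem_filter.1 hg).2, mem_univ _⟩
  · obtain ⟨hrange, hcompl⟩ := Prod.mk.inj hg
    funext x
    by_cases hx : x ∈ univ.map h
    · obtain ⟨k, -, rfl⟩ := mem_map.1 hx
      exact congrFun hrange k
    · exact congrFun hcompl ⟨x, hx⟩

lemma card_filter_exists_comp_mem_le [DecidableEq ρ] [Fintype κ] (X : Finset (κ → α)) :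
    #{g : ρ → α | ∃ h : κ ↪ ρ, g ∘ h ∈ X} ≤
      Fintype.card ρ ^ Fintype.card κ *
        (#X * Fintype.card α ^ (Fintype.card ρ - Fintype.card κ)) := by
  have hunion : ({g : ρ → α | ∃ h : κ ↪ ρ, g ∘ h ∈ X} : Finset _) =
      univ.biUnion fun h : κ ↪ ρ => {g : ρ → α | g ∘ h ∈ X} := by
    ext g
    simp only [mem_filter_univ, mem_biUnion, mem_univ, true_and]
  rw [hunion]
  refine (card_biUnion_le_card_mul _ _ _ fun h _ => card_filter_comp_mem_le h X).trans
    (Nat.mul_le_mul_right _ ?_)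
  rw [card_univ, Fintype.card_embedding_eq]
  exact Nat.descFactorial_le_pow _ _

lemma card_filter_sym2Mk_mem_le (X : Finset (Sym2 α)) :
    #{x : Fin 2 → α | s(x 0, x 1) ∈ X} ≤ 2 * #X := by
  refine card_le_mul_card_image_of_maps_to (f := fun x : Fin 2 → α => s(x 0, x 1))
    (fun x hx => (mem_filter.1 hx).2) 2 fun e _ => ?_
  induction e with | _ a b
  refine (card_le_card (t := {![a, b], ![b, a]}) fun x hx => ?_).trans card_le_two
  rw [mem_insert, mem_singleton, funext_iff, funext_iff, Fin.forall_fin_two, Fin.forall_fin_two]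
  exact Sym2.eq_iff.1 (mem_filter.1 hx).2

lemma RelAcyclic.card_pow_card_le [Fintype β] {F : β → β → Prop} (hF : RelAcyclic F)
    (hρ : 2 ^ Fintype.card β ≤ Fintype.card ρ) (C : Finset (α × α)) :
    Fintype.card α ^ Fintype.card ρ ≤
      Fintype.card ρ ^ 2 *
        (2 * (Fintype.card α + #(missedPairs C)) * Fintype.card α ^ (Fintype.card ρ - 2)) +
      Fintype.card ρ ^ Fintype.card β *
        (#{f : β ↪ α | copyArcs F f ⊆ C} *
          Fintype.card α ^ (Fintype.card ρ - Fintype.card β)) := by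
  classical
  set X : Finset (Fin 2 → α) := {x | s(x 0, x 1) ∈ univ.image Sym2.diag ∪ missedPairs C}
  set Y : Finset (β → α) := ({f : β ↪ α | copyArcs F f ⊆ C} : Finset _).image (⇑)
  have hX : #X ≤ 2 * (Fintype.card α + #(missedPairs C)) :=
    (card_filter_sym2Mk_mem_le _).trans <| Nat.mul_le_mul_left 2 <|
      (card_union_le _ _).trans (Nat.add_le_add_right card_image_le _)
  have hcover : (univ : Finset (ρ → α)) ⊆
      ({g | ∃ h : Fin 2 ↪ ρ, g ∘ h ∈ X} : Finset _) ∪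
        ({g | ∃ h : β ↪ ρ, g ∘ h ∈ Y} : Finset _) := by
    intro g _
    rw [mem_union, mem_filter_univ, mem_filter_univ]
    refine (hF.exists_comp_eq_of_two_pow_le_card hρ C g).imp ?_ ?_
    · rintro ⟨h, hh⟩
      exact ⟨h, (mem_filter_univ _).2 hh⟩
    · rintro ⟨h, f, hgf, hf⟩
      exact ⟨h, mem_image.2 ⟨f, (mem_filter_univ _).2 hf, hgf.symm⟩⟩
  calc Fintype.card α ^ Fintype.card ρ = #(univ : Finset (ρ → α)) := by
        rw [card_univ, Fintype.card_fun]
    _ ≤ #{g : ρ → α | ∃ h : Fin 2 ↪ ρ, g ∘ h ∈ X} + #{g : ρ → α | ∃ h : β ↪ ρ, g ∘ h ∈ Y} :=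
        (card_le_card hcover).trans (card_union_le _ _)
    _ ≤ _ := by
        refine add_le_add ((card_filter_exists_comp_mem_le X).trans ?_)
          ((card_filter_exists_comp_mem_le Y).trans ?_)
        · rw [Fintype.card_fin]
          gcongr
        · gcongr
          exact card_image_le

end Counting

theorem RelAcyclic.sq_div_le_card_missedPairs [Fintype β] {F : β → β → Prop}
    (hF : RelAcyclic F) {R : ℕ} (hR : 2 ^ (Fintype.card β + 1) ≤ R)
    (hα : 8 * R ^ 2 ≤ Fintype.card α)
    {C : Finset (α × α)} (hC : (#{f : β ↪ α | copyArcs F f ⊆ C} : ℝ) ≤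
      (Fintype.card α : ℝ) ^ Fintype.card β / (2 * R ^ Fintype.card β)) :
    (Fintype.card α : ℝ) ^ 2 / (8 * R ^ 2) ≤ #(missedPairs C) := by
  set N := Fintype.card α
  set v := Fintype.card β
  have hv : v < 2 ^ v := Nat.lt_two_pow_self
  rw [pow_succ] at hR
  have hRpos : (0 : ℝ) < R := by exact_mod_cast (by omega : 0 < R)
  have hN8 : 8 * (R : ℝ) ^ 2 ≤ N := by exact_mod_cast hα
  have hNpos : (0 : ℝ) < N := lt_of_lt_of_le (by positivity) hN8
  have hcount : (N : ℝ) ^ R ≤ R ^ 2 * (2 * (N + #(missedPairs C)) * N ^ (R - 2)) +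
      R ^ v * (#{f : β ↪ α | copyArcs F f ⊆ C} * N ^ (R - v)) := by
    have := hF.card_pow_card_le (ρ := Fin R) (by rw [Fintype.card_fin]; change 2 ^ v ≤ R; omega) C
    rw [Fintype.card_fin] at this
    exact_mod_cast this
  have hcopies : (R : ℝ) ^ v * (#{f : β ↪ α | copyArcs F f ⊆ C} * N ^ (R - v)) ≤ N ^ R / 2 := by
    calc (R : ℝ) ^ v * (#{f : β ↪ α | copyArcs F f ⊆ C} * N ^ (R - v))
        ≤ R ^ v * (N ^ v / (2 * R ^ v) * N ^ (R - v)) := by gcongr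
      _ = N ^ v * N ^ (R - v) / 2 := by field_simp
      _ = N ^ R / 2 := by rw [← pow_add, Nat.add_sub_cancel' (by omega)]
  have hsq : (N : ℝ) ^ 2 ≤ 4 * R ^ 2 * (N + #(missedPairs C)) := by
    have hsplit : (N : ℝ) ^ R = N ^ 2 * N ^ (R - 2) := by
      rw [← pow_add, Nat.add_sub_cancel' (by omega)]
    refine le_of_mul_le_mul_right ?_ (pow_pos hNpos (R - 2))
    linarith
  rw [div_le_iff₀ (by positivity)]
  nlinarith

end Supersaturation

/-! ### Containers for digraphs without a copy of an acyclic digraph -/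

section DigraphContainer

variable {α β : Type*} [Fintype α] [DecidableEq α] [Fintype β]

lemma card_filter_forall_mem_eq_le [DecidableEq β] (f₀ : β ↪ α) (U : Finset β) :
    #{f : β ↪ α | ∀ u ∈ U, f u = f₀ u} ≤ Fintype.card α ^ (Fintype.card β - #U) := by
  have h := card_filter_comp_mem_le (Function.Embedding.subtype (· ∈ U))
    {fun u : U => f₀ u}
  rw [card_singleton, one_mul, Fintype.card_coe] at h
  refine (card_le_card_of_injOn (⇑) (fun f hf => ?_) DFunLike.coe_injective.injOn).trans h
  have hf' := (mem_filter.1 hf).2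
  exact (mem_filter_univ _).2 (mem_singleton.2 (funext fun u => hf' u u.2))

lemma card_filter_forall_prodMap_eq_le [DecidableEq β] {κ : Type*} [Fintype κ]
    (s : κ → β × β) (t : κ → α × α) :
    #{f : β ↪ α | ∀ i, f.prodMap f (s i) = t i} ≤
      Fintype.card α ^ (Fintype.card β - #(endpoints (univ.image s))) := by
  obtain h₀ | ⟨f₀, hf₀⟩ :=
    ({f : β ↪ α | ∀ i, f.prodMap f (s i) = t i} : Finset _).eq_empty_or_nonempty
  · rw [h₀, card_empty]
    exact Nat.zero_le _
  refine (card_le_card (monotone_filter_right _ fun f _ hf => ?_)).trans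
    (card_filter_forall_mem_eq_le f₀ (endpoints (univ.image s)))
  have hagree : ∀ i, f.prodMap f (s i) = f₀.prodMap f₀ (s i) := fun i =>
    (hf i).trans ((mem_filter.1 hf₀).2 i).symm
  simp only [endpoints, mem_union, mem_image, mem_univ, true_and]
  rintro u (⟨_, ⟨i, rfl⟩, rfl⟩ | ⟨_, ⟨i, rfl⟩, rfl⟩)
  exacts [congrArg Prod.fst (hagree i), congrArg Prod.snd (hagree i)]

lemma RelAcyclic.pow_card_sub_card_endpoints_le [DecidableEq β] {F : β → β → Prop}
    (hF : RelAcyclic F) {N q : ℝ} (hq₀ : 0 < q) (hq₁ : q ≤ 1) (hq : 1 ≤ N * q ^ m2Rel F)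
    {A : Finset (β × β)} (hA : ∀ a ∈ A, F a.1 a.2) (hcard : 2 ≤ #A) :
    N ^ (Fintype.card β - #(endpoints A)) ≤ N ^ Fintype.card β / N ^ 2 * q ^ (#A - 1) := by
  have h3 := hF.three_le_card_endpoints hA hcard
  have hdensity := hF.card_sub_one_le_m2Rel_mul hA hcard
  obtain ⟨w, hw⟩ := Nat.exists_eq_add_of_le' (show 2 ≤ #(endpoints A) by omega)
  obtain ⟨c, hc⟩ := Nat.exists_eq_add_of_le (card_le_univ (endpoints A))
  rw [hw] at hdensity
  have hN : 0 < N := pos_of_mul_pos_left (one_pos.trans_le hq) (Real.rpow_nonneg hq₀.le _)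
  have hpow : 1 ≤ N ^ w * q ^ (#A - 1) := by
    calc 1 ≤ (N * q ^ m2Rel F) ^ w := one_le_pow₀ hq
      _ = N ^ w * q ^ (m2Rel F * w) := by rw [mul_pow, Real.rpow_mul_natCast hq₀.le]
      _ ≤ N ^ w * q ^ (#A - 1) := by
        rw [← Real.rpow_natCast q, Nat.cast_sub (by omega)]
        refine mul_le_mul_of_nonneg_left (Real.rpow_le_rpow_of_exponent_ge hq₀ hq₁ ?_)
          (by positivity)
        push_cast at hdensity ⊢
        linarith
  calc N ^ (Fintype.card β - #(endpoints A)) = N ^ c * 1 := by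
        rw [hc, Nat.add_sub_cancel_left, mul_one]
    _ ≤ N ^ c * (N ^ w * q ^ (#A - 1)) := by gcongr
    _ = N ^ Fintype.card β / N ^ 2 * q ^ (#A - 1) := by
      rw [hc, hw]
      field_simp
      ring

lemma RelAcyclic.card_filter_forall_prodMap_eq_le_mul_pow {F : β → β → Prop} (hF : RelAcyclic F)
    {q : ℝ} (hq₀ : 0 < q) (hq₁ : q ≤ 1) (hq : 1 ≤ Fintype.card α * q ^ m2Rel F)
    {J : Finset (α × α)} (hJ : 2 ≤ #J) (s : J → arcs F) :
    (#{f : β ↪ α | ∀ j, f.prodMap f (s j) = j} : ℝ) ≤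
      (Fintype.card α : ℝ) ^ Fintype.card β / Fintype.card α ^ 2 * q ^ (#J - 1) := by
  classical
  obtain h₀ | ⟨f₀, hf₀⟩ :=
    ({f : β ↪ α | ∀ j, f.prodMap f (s j) = j} : Finset _).eq_empty_or_nonempty
  · rw [h₀, card_empty, Nat.cast_zero]
    positivity
  rw [mem_filter_univ] at hf₀
  have hs : Function.Injective fun j => (s j : β × β) := fun j j' h =>
    Subtype.ext (((hf₀ j).symm.trans (congrArg _ h)).trans (hf₀ j'))
  have hcard : #(univ.image fun j => (s j : β × β)) = #J := by
    rw [card_image_of_injective _ hs, card_univ, Fintype.card_coe]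
  have harcs : ∀ a ∈ univ.image fun j => (s j : β × β), F a.1 a.2 :=
    forall_mem_image.2 fun j _ => mem_arcs.1 (s j).2
  have hcount := card_filter_forall_prodMap_eq_le (fun j => (s j : β × β)) fun j : J => (j : α × α)
  have hle := hF.pow_card_sub_card_endpoints_le hq₀ hq₁ hq harcs (hcard ▸ hJ)
  rw [hcard] at hle
  exact le_trans (by exact_mod_cast hcount) hle

theorem RelAcyclic.card_filter_subset_copyArcs_le {F : β → β → Prop} (hF : RelAcyclic F) {q : ℝ}
    (hq₀ : 0 < q) (hq₁ : q ≤ 1) (hq : 1 ≤ Fintype.card α * q ^ m2Rel F) {J : Finset (α × α)}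
    (hJ : 2 ≤ #J) :
    (#{f : β ↪ α | J ⊆ copyArcs F f} : ℝ) ≤ #(arcs F) ^ #(arcs F) *
      ((Fintype.card α : ℝ) ^ Fintype.card β / Fintype.card α ^ 2) * q ^ (#J - 1) := by
  obtain hlt | hle := lt_or_ge #(arcs F) #J
  · have hempty : ({f : β ↪ α | J ⊆ copyArcs F f} : Finset _) = ∅ :=
      filter_eq_empty_iff.2 fun f _ hf => hlt.not_ge ((card_le_card hf).trans (card_map _).le)
    rw [hempty, card_empty, Nat.cast_zero]
    positivity
  have hcover : ({f : β ↪ α | J ⊆ copyArcs F f} : Finset _) ⊆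
      univ.biUnion fun s : J → arcs F => {f | ∀ j, f.prodMap f (s j) = j} := by
    intro f hf
    have hpre : ∀ j : J, ∃ a : arcs F, f.prodMap f a = j := fun j =>
      let ⟨a, ha, haj⟩ := mem_map.1 ((mem_filter.1 hf).2 j.2)
      ⟨⟨a, ha⟩, haj⟩
    choose s hs using hpre
    exact mem_biUnion.2 ⟨s, mem_univ s, (mem_filter_univ _).2 hs⟩
  have hassign : Fintype.card (J → arcs F) ≤ #(arcs F) ^ #(arcs F) := by
    rw [Fintype.card_fun, Fintype.card_coe, Fintype.card_coe]
    exact Nat.pow_le_pow_right (by omega) hle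
  calc (#{f : β ↪ α | J ⊆ copyArcs F f} : ℝ)
      ≤ ∑ s : J → arcs F, (#{f : β ↪ α | ∀ j, f.prodMap f (s j) = j} : ℝ) := by
        exact_mod_cast (card_le_card hcover).trans card_biUnion_le
    _ ≤ ∑ _s : J → arcs F,
          (Fintype.card α : ℝ) ^ Fintype.card β / Fintype.card α ^ 2 * q ^ (#J - 1) :=
        sum_le_sum fun s _ => hF.card_filter_forall_prodMap_eq_le_mul_pow hq₀ hq₁ hq hJ s
    _ = Fintype.card (J → arcs F) *
          ((Fintype.card α : ℝ) ^ Fintype.card β / Fintype.card α ^ 2 * q ^ (#J - 1)) := by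
        rw [sum_const, card_univ, nsmul_eq_mul]
    _ ≤ _ := by
        rw [mul_assoc]
        gcongr
        exact_mod_cast hassign

/-- `C` is a container map for the digraphs on `α` without a copy of `F`: each such digraph,
given by its arc set `I`, has a fingerprint `S ⊆ I` of size at most `s` whose container `C S`
contains `I` and leaves at least `t` pairs of vertices unjoined. -/
def IsContainerMap (F : β → β → Prop) (C : Finset (α × α) → Finset (α × α)) (s t : ℝ) : Prop :=
  ∀ I, (∀ f : β ↪ α, ¬ copyArcs F f ⊆ I) →
    ∃ S ⊆ I, (#S : ℝ) ≤ s ∧ I ⊆ C S ∧ t ≤ #(missedPairs (C S))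

theorem RelAcyclic.exists_isContainerMap {F : β → β → Prop} (hF : RelAcyclic F) :
    ∃ (K δ A : ℝ) (N₀ : ℕ), 0 < δ ∧ 1 ≤ A ∧
      ∀ {α : Type*} [Fintype α] [DecidableEq α] {q : ℝ}, N₀ ≤ Fintype.card α → 0 < q →
        A * q ≤ 1 / 2 → 1 ≤ Fintype.card α * q ^ m2Rel F →
        ∃ C : Finset (α × α) → Finset (α × α),
          IsContainerMap F C (K * q * Fintype.card α ^ 2) (δ * Fintype.card α ^ 2) := by
  set v := Fintype.card β
  set r := #(arcs F)
  set R := 2 ^ (v + 1)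
  have hR : (0 : ℝ) < R := by positivity
  set A : ℝ := max 1 (r ^ r * (2 ^ r) ^ r * (2 * R ^ v))
  have hA : 1 ≤ A := le_max_left _ _
  refine ⟨r * (8 * A), 1 / (8 * R ^ 2), A, 8 * R ^ 2, by positivity, hA, ?_⟩
  intro α _ _ q hα hq₀ hAq hq
  have hN : (0 : ℝ) < Fintype.card α := by exact_mod_cast lt_of_lt_of_le (by positivity) hα
  obtain ⟨C, hC⟩ := exists_forall_subset_container hq₀.le hA
    (D := r ^ r * ((Fintype.card α : ℝ) ^ v / Fintype.card α ^ 2)) (by positivity) hAq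
    (copyArcs (α := α) F) (fun f => (card_map _).le)
    fun J hJ => hF.card_filter_subset_copyArcs_le hq₀ (by nlinarith) hq hJ
  refine ⟨C, fun I hI => ?_⟩
  obtain ⟨S, hSI, hS, hIC, hcopies⟩ := hC I hI
  have hcard : (Fintype.card (α × α) : ℝ) = Fintype.card α ^ 2 := by
    rw [Fintype.card_prod, Nat.cast_mul, sq]
  rw [hcard] at hS hcopies
  refine ⟨S, hSI, hS.trans_eq (by ring), hIC, ?_⟩
  · rw [one_div_mul_eq_div]
    refine hF.sq_div_le_card_missedPairs le_rfl hα (hcopies.trans ?_)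
    have hAr : (r : ℝ) ^ r * (2 ^ r) ^ r * (2 * R ^ v) ≤ A := le_max_right _ _
    calc (r : ℝ) ^ r * ((Fintype.card α : ℝ) ^ v / Fintype.card α ^ 2) / A *
          ((2 ^ r) ^ r * Fintype.card α ^ 2)
        = (r : ℝ) ^ r * (2 ^ r) ^ r * (2 * R ^ v) / A *
            ((Fintype.card α : ℝ) ^ v / (2 * R ^ v)) := by field_simp
      _ ≤ (Fintype.card α : ℝ) ^ v / (2 * R ^ v) :=
          mul_le_of_le_one_left (by positivity) ((div_le_one (by positivity)).2 hAr)

end DigraphContainer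

/-! ### Orientations and the binomial random graph -/

lemma Arrows.of_embedding {α α' β : Type*} {G : SimpleGraph α} {G' : SimpleGraph α'}
    {F : β → β → Prop} (h : Arrows G F) (φ : G ↪g G') : Arrows G' F := by
  intro o ho
  obtain ⟨f, hf, hF⟩ := h (fun x y => o (φ x) (φ y))
    ⟨fun _ _ hxy => φ.map_adj_iff.1 (ho.1 _ _ hxy), fun _ _ hxy => ho.2 _ _ (φ.map_adj_iff.2 hxy)⟩
  exact ⟨φ ∘ f, φ.injective.comp hf, hF⟩

section RandomGraph

open scoped Classical in
/-- Graphs on `V` are the sets of non-diagonal unordered pairs; this turns `G(n, p)` into the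
binomial random subset of these pairs. -/
noncomputable def graphEquivFinset (V : Type*) [Fintype V] :
    SimpleGraph V ≃ Finset {e : Sym2 V // ¬ e.IsDiag} where
  toFun G := {e | e.1 ∈ G.edgeSet}
  invFun X := SimpleGraph.fromEdgeSet (Subtype.val '' (X : Set {e : Sym2 V // ¬ e.IsDiag}))
  left_inv G := by
    rw [← SimpleGraph.edgeSet_inj, SimpleGraph.edgeSet_fromEdgeSet]
    ext e
    simpa [and_assoc] using fun he => G.not_isDiag_of_mem_edgeSet he
  right_inv X := by
    ext ⟨e, he⟩
    simp [he]

lemma mem_graphEquivFinset {V : Type*} [Fintype V] {G : SimpleGraph V}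
    {e : {e : Sym2 V // ¬ e.IsDiag}} : e ∈ graphEquivFinset V G ↔ e.1 ∈ G.edgeSet := by
  classical exact mem_filter_univ _

lemma card_graphEquivFinset {V : Type*} [Fintype V] (G : SimpleGraph V) :
    #(graphEquivFinset V G) = G.edgeSet.ncard := by
  rw [← card_map (Function.Embedding.subtype _), ← Set.ncard_coe_finset]
  congr 1
  ext e
  simpa [mem_graphEquivFinset] using fun he => G.not_isDiag_of_mem_edgeSet he

lemma probGnp_eq_subsetProb (n : ℕ) (p : ℝ) (Q : SimpleGraph (Fin n) → Prop) :
    probGnp n p Q = subsetProb p fun X => Q ((graphEquivFinset (Fin n)).symm X) := by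
  classical
  rw [probGnp, subsetProb, ← sum_filter]
  refine sum_equiv (graphEquivFinset (Fin n)) (fun G => ?_) fun G _ => ?_
  · simp only [mem_filter_univ, Equiv.symm_apply_apply]
  · rw [bernoulliWeight, card_graphEquivFinset, Sym2.card_subtype_not_diag, Fintype.card_fin]

lemma probGnp_compl (n : ℕ) (p : ℝ) (Q : SimpleGraph (Fin n) → Prop) :
    probGnp n p Q = 1 - probGnp n p (fun G => ¬ Q G) := by
  simp only [probGnp_eq_subsetProb]
  exact subsetProb_compl p _

variable {n : ℕ} {p : ℝ}

lemma probGnp_nonneg (hp₀ : 0 ≤ p) (hp₁ : p ≤ 1) (Q : SimpleGraph (Fin n) → Prop) :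
    0 ≤ probGnp n p Q := by
  rw [probGnp_eq_subsetProb]
  exact subsetProb_nonneg hp₀ hp₁ _

lemma probGnp_le_sum (hp₀ : 0 ≤ p) (hp₁ : p ≤ 1) {ι : Type*} {P : SimpleGraph (Fin n) → Prop}
    {Q : ι → SimpleGraph (Fin n) → Prop} (s : Finset ι) (h : ∀ G, P G → ∃ i ∈ s, Q i G) :
    probGnp n p P ≤ ∑ i ∈ s, probGnp n p (Q i) := by
  simp only [probGnp_eq_subsetProb]
  exact subsetProb_le_sum hp₀ hp₁ s fun X => h _

variable {α : Type*}

lemma probGnp_subset_edgeSet_and_disjoint {S T : Finset (Sym2 (Fin n))}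
    (hS : ∀ e ∈ S, ¬ e.IsDiag) (hT : ∀ e ∈ T, ¬ e.IsDiag) (h : Disjoint S T) :
    probGnp n p (fun G => ↑S ⊆ G.edgeSet ∧ Disjoint ↑T G.edgeSet) = p ^ #S * (1 - p) ^ #T := by
  classical
  have hST : Disjoint (S.subtype fun e => ¬ e.IsDiag) (T.subtype fun e => ¬ e.IsDiag) :=
    disjoint_left.2 fun e he he' => disjoint_left.1 h (mem_subtype.1 he) (mem_subtype.1 he')
  have hcard : ∀ {U : Finset (Sym2 (Fin n))}, (∀ e ∈ U, ¬ e.IsDiag) →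
      #(U.subtype fun e => ¬ e.IsDiag) = #U := fun hU => by
    rw [card_subtype, filter_true_of_mem hU]
  rw [← hcard hS, ← hcard hT, ← subsetProb_subset_and_disjoint p hST, probGnp_eq_subsetProb]
  congr 1
  ext X
  obtain ⟨G, rfl⟩ := (graphEquivFinset (Fin n)).surjective X
  rw [Equiv.symm_apply_apply]
  simp only [Set.subset_def, Set.disjoint_left, subset_iff, disjoint_left, mem_coe, mem_subtype,
    mem_graphEquivFinset, Subtype.forall]
  exact ⟨fun hG => ⟨fun e _ => hG.1 e, fun e _ he => hG.2 he⟩,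
    fun hG => ⟨fun e he => hG.1 e (hS e he) he, fun e he => hG.2 e (hT e he) he⟩⟩

lemma probGnp_subset_edgeSet_comap_and_disjoint (ι : α ↪ Fin n) {S T : Finset (Sym2 α)}
    (hS : ∀ e ∈ S, ¬ e.IsDiag) (hT : ∀ e ∈ T, ¬ e.IsDiag) (h : Disjoint S T) :
    probGnp n p (fun G => ↑S ⊆ (G.comap ι).edgeSet ∧ Disjoint ↑T (G.comap ι).edgeSet) =
      p ^ #S * (1 - p) ^ #T := by
  have hmem : ∀ (G : SimpleGraph (Fin n)) (e : Sym2 α),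
      e ∈ (G.comap ι).edgeSet ↔ ι.sym2Map e ∈ G.edgeSet := fun G e => by
    induction e with | _ x y => rfl
  have hdiag : ∀ {U : Finset (Sym2 α)}, (∀ e ∈ U, ¬ e.IsDiag) →
      ∀ e ∈ U.map ι.sym2Map, ¬ e.IsDiag := fun hU => forall_mem_map.2 fun e he =>
    (Sym2.isDiag_map ι.injective).not.2 (hU e he)
  rw [← card_map ι.sym2Map, ← card_map ι.sym2Map (s := T),
    ← probGnp_subset_edgeSet_and_disjoint (hdiag hS) (hdiag hT) ((disjoint_map _).2 h)]
  congr! 3 with G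
  · simp only [Set.subset_def, mem_coe, hmem, coe_map, Set.forall_mem_image]
  · simp only [Set.disjoint_left, mem_coe, hmem, coe_map, Set.forall_mem_image]

end RandomGraph

section Arrowing

variable {α β : Type*} {F : β → β → Prop}

lemma probGnp_not_forall_arrows_le {n N : ℕ} {p ε : ℝ} (hp₀ : 0 ≤ p) (hp₁ : p ≤ 1) (hε : 0 ≤ ε)
    (h : ∀ ι : Fin N ↪ Fin n, probGnp n p (fun G => ¬ Arrows (G.comap ι) F) ≤ ε) :
    probGnp n p (fun G => ¬ ∀ W : Finset (Fin n), N ≤ #W →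
      Arrows (SimpleGraph.induce (W : Set (Fin n)) G) F) ≤ (n : ℝ) ^ N * ε := by
  have hcover : ∀ G : SimpleGraph (Fin n), (¬ ∀ W : Finset (Fin n), N ≤ #W →
      Arrows (SimpleGraph.induce (W : Set (Fin n)) G) F) →
      ∃ ι ∈ (univ : Finset (Fin N ↪ Fin n)), ¬ Arrows (G.comap ι) F := by
    intro G hG
    contrapose! hG
    intro W hW
    obtain ⟨j⟩ : Nonempty (Fin N ↪ W) := Function.Embedding.nonempty_of_card_le (by simpa)
    exact (hG (j.trans (Function.Embedding.subtype _)) (mem_univ _)).of_embedding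
      (SimpleGraph.Embedding.comap j (SimpleGraph.induce (W : Set (Fin n)) G))
  have hcard : Fintype.card (Fin N ↪ Fin n) ≤ n ^ N := by
    rw [Fintype.card_embedding_eq, Fintype.card_fin, Fintype.card_fin]
    exact Nat.descFactorial_le_pow n N
  calc _ ≤ ∑ ι : Fin N ↪ Fin n, probGnp n p (fun G => ¬ Arrows (G.comap ι) F) :=
        probGnp_le_sum hp₀ hp₁ univ hcover
    _ ≤ Fintype.card (Fin N ↪ Fin n) * ε := by
        simpa only [nsmul_eq_mul, card_univ] using sum_le_card_nsmul univ _ ε fun ι _ => h ι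
    _ ≤ (n : ℝ) ^ N * ε := by
        gcongr
        exact_mod_cast hcard

variable [Fintype α] [DecidableEq α] [Fintype β] {C : Finset (α × α) → Finset (α × α)} {s t : ℝ}

/-- The sets of arcs which can occur as the fingerprint, with respect to the container map `C`,
of an orientation of a graph. -/
noncomputable def orientedFingerprints (C : Finset (α × α) → Finset (α × α)) (s t : ℝ) :
    Finset (Finset (α × α)) :=
  {S | (#S : ℝ) ≤ s ∧ S ⊆ C S ∧ t ≤ #(missedPairs (C S)) ∧ ∀ a ∈ S, a.1 ≠ a.2 ∧ a.swap ∉ S}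

lemma IsContainerMap.exists_mem_orientedFingerprints (hC : IsContainerMap F C s t)
    {G : SimpleGraph α} (hG : ¬ Arrows G F) :
    ∃ S ∈ orientedFingerprints C s t, ↑(S.image fun a => s(a.1, a.2)) ⊆ G.edgeSet ∧
      Disjoint ↑(missedPairs (C S)) G.edgeSet := by
  classical
  obtain ⟨o, ho, hcopy⟩ : ∃ o, IsOrientation G o ∧ ¬ HasCopy o F := by
    simpa only [Arrows, not_forall, exists_prop] using hG
  obtain ⟨S, hSI, hSs, hIC, ht⟩ := hC (arcs o) fun f hf =>
    hcopy ⟨f, f.injective, fun a b hab => mem_arcs.1 (copyArcs_subset_iff.1 hf a b hab)⟩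
  have hSo : ∀ a ∈ S, o a.1 a.2 := fun a ha => mem_arcs.1 (hSI ha)
  have hadj : ∀ a ∈ S, G.Adj a.1 a.2 := fun a ha => ho.1 _ _ (hSo a ha)
  refine ⟨S, (mem_filter_univ _).2 ⟨hSs, hSI.trans hIC, ht, fun a ha => ⟨(hadj a ha).ne, ?_⟩⟩,
    ?_, Set.disjoint_left.2 fun e he heG => ?_⟩
  · exact fun ha' => (ho.2 _ _ (hadj a ha)).1 (hSo a ha) (hSo _ ha')
  · rw [coe_image, Set.image_subset_iff]
    exact hadj
  · induction e with | _ x y =>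
    obtain ⟨-, hxy, hyx⟩ := mk_mem_missedPairs.1 he
    refine hxy (hIC (mem_arcs.2 ((ho.2 x y heG).2 fun h => hyx (hIC (mem_arcs.2 h)))))

lemma probGnp_fingerprint_le {n : ℕ} {p : ℝ} (hp₀ : 0 ≤ p) (hp₁ : p ≤ 1) (ι : α ↪ Fin n)
    {S : Finset (α × α)} (hS : S ∈ orientedFingerprints C s t) :
    probGnp n p (fun G => ↑(S.image fun a => s(a.1, a.2)) ⊆ (G.comap ι).edgeSet ∧
      Disjoint ↑(missedPairs (C S)) (G.comap ι).edgeSet) ≤ p ^ #S * Real.exp (-(p * t)) := by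
  obtain ⟨-, hSC, ht, hor⟩ := (mem_filter_univ _).1 hS
  have hinj : Set.InjOn (fun a : α × α => s(a.1, a.2)) S := fun a ha b hb hab =>
    (Sym2.mk_eq_mk_iff.1 hab).resolve_right fun h => (hor b hb).2 (h ▸ ha)
  have hdisj : Disjoint (S.image fun a => s(a.1, a.2)) (missedPairs (C S)) := by
    refine disjoint_left.2 fun e he he' => (mem_filter.1 he').2.2 (image_mono _ hSC he)
  rw [probGnp_subset_edgeSet_comap_and_disjoint ι
    (forall_mem_image.2 fun a ha => Sym2.mk_isDiag_iff.not.2 (hor a ha).1)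
    (fun e he => (mem_filter.1 he).2.1) hdisj, card_image_of_injOn hinj]
  gcongr
  calc (1 - p) ^ #(missedPairs (C S)) ≤ Real.exp (-p) ^ #(missedPairs (C S)) :=
        pow_le_pow_left₀ (sub_nonneg.2 hp₁) (Real.one_sub_le_exp_neg p) _
    _ = Real.exp (-(p * #(missedPairs (C S)))) := by
        rw [← Real.exp_nat_mul, mul_neg, mul_comm]
    _ ≤ Real.exp (-(p * t)) := by gcongr

lemma sum_pow_card_le_exp {V : Type*} [Fintype V] {p L : ℝ} (hp : 0 ≤ p) (hL : 0 ≤ L)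
    (𝒮 : Finset (Finset V)) (h𝒮 : ∀ S ∈ 𝒮, (#S : ℝ) ≤ s) :
    ∑ S ∈ 𝒮, p ^ #S ≤ Real.exp (L * s + Real.exp (-L) * p * Fintype.card V) := by
  have hterm : ∀ S ∈ 𝒮, p ^ #S ≤ Real.exp (L * s) * (Real.exp (-L) * p) ^ #S := fun S hS => by
    have hone : 1 ≤ Real.exp (L * s) * Real.exp (-L) ^ #S := by
      rw [← Real.exp_nat_mul, ← Real.exp_add]
      exact Real.one_le_exp (by nlinarith [h𝒮 S hS])
    rw [mul_pow, ← mul_assoc]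
    exact le_mul_of_one_le_left (by positivity) hone
  calc ∑ S ∈ 𝒮, p ^ #S ≤ ∑ S ∈ 𝒮, Real.exp (L * s) * (Real.exp (-L) * p) ^ #S := sum_le_sum hterm
    _ ≤ ∑ S : Finset V, Real.exp (L * s) * (Real.exp (-L) * p) ^ #S :=
        sum_le_sum_of_subset_of_nonneg (subset_univ _) fun _ _ _ => by positivity
    _ = Real.exp (L * s) * (Real.exp (-L) * p + 1) ^ Fintype.card V := by
        rw [← mul_sum, ← Fintype.sum_pow_mul_eq_add_pow]
        simp only [one_pow, mul_one]
    _ ≤ Real.exp (L * s) * Real.exp (Real.exp (-L) * p) ^ Fintype.card V := by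
        gcongr
        exact Real.add_one_le_exp _
    _ = _ := by rw [← Real.exp_nat_mul, ← Real.exp_add, mul_comm (Fintype.card V : ℝ)]

theorem IsContainerMap.probGnp_not_arrows_comap_le (hC : IsContainerMap F C s t) {n : ℕ}
    {p L : ℝ} (hp₀ : 0 ≤ p) (hp₁ : p ≤ 1) (hL : 0 ≤ L) (ι : α ↪ Fin n) :
    probGnp n p (fun G => ¬ Arrows (G.comap ι) F) ≤
      Real.exp (L * s + Real.exp (-L) * p * Fintype.card α ^ 2 - p * t) :=
  calc probGnp n p (fun G => ¬ Arrows (G.comap ι) F)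
      ≤ ∑ S ∈ orientedFingerprints C s t, p ^ #S * Real.exp (-(p * t)) :=
        (probGnp_le_sum hp₀ hp₁ _ fun _ => hC.exists_mem_orientedFingerprints).trans
          (sum_le_sum fun S hS => probGnp_fingerprint_le hp₀ hp₁ ι hS)
    _ ≤ Real.exp (L * s + Real.exp (-L) * p * Fintype.card (α × α)) * Real.exp (-(p * t)) := by
        rw [← sum_mul]
        gcongr
        exact sum_pow_card_le_exp hp₀ hL _ fun S hS => ((mem_filter_univ _).1 hS).1
    _ = _ := by
        rw [← Real.exp_add, ← sub_eq_add_neg, Fintype.card_prod, Nat.cast_mul, sq]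

theorem RelAcyclic.exists_probGnp_not_forall_arrows_le (hF : RelAcyclic F) :
    ∃ (B c q₀ : ℝ) (N₀ : ℕ), 1 ≤ B ∧ 0 < c ∧ 0 < q₀ ∧ B * q₀ ≤ 1 ∧
      ∀ {n N : ℕ} {q : ℝ}, N₀ ≤ N → 0 < q → q ≤ q₀ → 1 ≤ N * q ^ m2Rel F →
        probGnp n (B * q) (fun G => ¬ ∀ W : Finset (Fin n), N ≤ #W →
            Arrows (SimpleGraph.induce (W : Set (Fin n)) G) F) ≤
          (n : ℝ) ^ N * Real.exp (-(c * q * N ^ 2)) := by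
  classical
  obtain ⟨K, δ, A, N₀, hδ, hA, hcontainer⟩ := hF.exists_isContainerMap
  set L := max 0 (Real.log (4 / δ))
  have hL₀ : 0 ≤ L := le_max_left _ _
  have hL : Real.exp (-L) ≤ δ / 4 := by
    rw [Real.exp_neg, inv_le_comm₀ (Real.exp_pos _) (by positivity), inv_div,
      ← Real.log_le_iff_le_exp (by positivity)]
    exact le_max_right _ _
  set B := max 1 (4 * K * L / δ)
  have hB : 1 ≤ B := le_max_left _ _
  have hLK : 4 * K * L ≤ B * δ := (div_le_iff₀ hδ).1 (le_max_right _ _)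
  have hAB : 0 < 2 * A + B := by linarith
  refine ⟨B, δ / 2, 1 / (2 * A + B), N₀, hB, by positivity, by positivity, ?_, ?_⟩
  · rw [mul_one_div, div_le_one hAB]
    linarith
  intro n N q hN hq₀ hq hNq
  rw [le_div_iff₀ hAB] at hq
  obtain ⟨C, hC⟩ := hcontainer (α := Fin N) (q := q) (by simpa) hq₀ (by nlinarith) (by simpa)
  have hBq : B * q ≤ 1 := by nlinarith
  refine probGnp_not_forall_arrows_le (by positivity) hBq (Real.exp_pos _).le fun ι =>
    (hC.probGnp_not_arrows_comap_le (by positivity) hBq hL₀ ι).trans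
      (Real.exp_le_exp.2 ?_)
  rw [Fintype.card_fin]
  have hqN : 0 ≤ q * (N : ℝ) ^ 2 := by positivity
  have hfingerprints := mul_le_mul_of_nonneg_right hLK hqN
  have hexp := mul_le_mul_of_nonneg_right hL (mul_nonneg (zero_le_one.trans hB) hqN)
  have hmissed := mul_le_mul_of_nonneg_right hB (mul_nonneg hδ.le hqN)
  linarith

end Arrowing

section Asymptotics

open Filter Topology

lemma eventually_pow_ceil_mul_exp_le_inv {a b c : ℝ} (hc : 0 < c) (hab : a < b) :
    ∀ᶠ n : ℕ in atTop, (n : ℝ) ^ ⌈(n : ℝ) ^ b⌉₊ *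
      Real.exp (-(c * (n : ℝ) ^ (-a) * ⌈(n : ℝ) ^ b⌉₊ ^ 2)) ≤ (n : ℝ)⁻¹ := by
  have hlog := tendsto_natCast_atTop_atTop.eventually
    ((isLittleO_log_rpow_atTop (sub_pos.2 hab)).bound (half_pos hc))
  filter_upwards [eventually_ge_atTop 1, hlog] with n hn hlog
  have hn₀ : (0 : ℝ) < n := by exact_mod_cast hn
  have hlog₀ : 0 ≤ Real.log n := Real.log_natCast_nonneg n
  rw [Real.norm_of_nonneg hlog₀, Real.norm_of_nonneg (by positivity)] at hlog
  have hN := Nat.le_ceil ((n : ℝ) ^ b)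
  have hN₁ : 1 ≤ ⌈(n : ℝ) ^ b⌉₊ := Nat.one_le_ceil_iff.2 (by positivity)
  generalize ⌈(n : ℝ) ^ b⌉₊ = N at hN hN₁ ⊢
  have hlogN : 2 * Real.log n ≤ c * ((n : ℝ) ^ (-a) * N) := by
    calc 2 * Real.log n ≤ c * (n : ℝ) ^ (b - a) := by linarith
      _ = c * ((n : ℝ) ^ (-a) * (n : ℝ) ^ b) := by rw [← Real.rpow_add hn₀, neg_add_eq_sub]
      _ ≤ c * ((n : ℝ) ^ (-a) * N) := by gcongr
  calc (n : ℝ) ^ N * Real.exp (-(c * (n : ℝ) ^ (-a) * N ^ 2))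
      = Real.exp (N * (Real.log n - c * ((n : ℝ) ^ (-a) * N))) := by
        rw [← Real.exp_log hn₀, ← Real.exp_nat_mul, ← Real.exp_add, Real.exp_log hn₀]
        ring_nf
    _ ≤ Real.exp (1 * -Real.log n) := by
        refine Real.exp_le_exp.2 ?_
        have hN₁' : (1 : ℝ) ≤ N := by exact_mod_cast hN₁
        nlinarith
    _ = (n : ℝ)⁻¹ := by rw [one_mul, Real.exp_neg, Real.exp_log hn₀]

lemma tendsto_probGnp_one {p ε : ℕ → ℝ} {Q : ∀ n, SimpleGraph (Fin n) → Prop}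
    (hp₀ : ∀ᶠ n in atTop, 0 ≤ p n) (hp₁ : ∀ᶠ n in atTop, p n ≤ 1)
    (hQ : ∀ᶠ n in atTop, probGnp n (p n) (fun G => ¬ Q n G) ≤ ε n)
    (hε : Tendsto ε atTop (𝓝 0)) : Tendsto (fun n => probGnp n (p n) (Q n)) atTop (𝓝 1) := by
  have hcompl : Tendsto (fun n => probGnp n (p n) fun G => ¬ Q n G) atTop (𝓝 0) :=
    squeeze_zero' (hp₀.and hp₁ |>.mono fun n hn => probGnp_nonneg hn.1 hn.2 _) hQ hε
  simpa only [← probGnp_compl, sub_zero] using hcompl.const_sub 1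

theorem stmt13_general {β : Type*} [Fintype β] (F : β → β → Prop) (hacyclic : RelAcyclic F)
    (hm : 1 < m2Rel F) :
    ∃ B : ℝ, 1 ≤ B ∧ ∀ γ < 1,
      Tendsto (fun n : ℕ => probGnp n (B * (n : ℝ) ^ (-((1 - γ) / m2Rel F)))
        (fun G => ∀ W : Finset (Fin n), (n : ℝ) ^ (1 - γ) ≤ (W.card : ℝ) →
          Arrows (SimpleGraph.induce (W : Set (Fin n)) G) F))
        atTop (𝓝 1) := by
  obtain ⟨B, c, q₀, N₀, hB, hc, hq₀, hBq₀, hbound⟩ :=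
    hacyclic.exists_probGnp_not_forall_arrows_le
  refine ⟨B, hB, fun γ hγ => ?_⟩
  simp only [← Nat.ceil_le]
  have hm₀ : 0 < m2Rel F := one_pos.trans hm
  have hq : ∀ᶠ n : ℕ in atTop, (n : ℝ) ^ (-((1 - γ) / m2Rel F)) ≤ q₀ :=
    ((tendsto_rpow_neg_atTop (div_pos (sub_pos.2 hγ) hm₀)).comp
      tendsto_natCast_atTop_atTop).eventually_le_const hq₀
  have hN : ∀ᶠ n : ℕ in atTop, (N₀ : ℝ) ≤ (n : ℝ) ^ (1 - γ) :=
    ((tendsto_rpow_atTop (sub_pos.2 hγ)).comp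
      tendsto_natCast_atTop_atTop).eventually_ge_atTop _
  refine tendsto_probGnp_one (.of_forall fun n => by positivity)
    (hq.mono fun n hn => (mul_le_mul_of_nonneg_left hn (by positivity)).trans hBq₀) ?_
    (tendsto_inv_atTop_zero.comp tendsto_natCast_atTop_atTop)
  filter_upwards [eventually_gt_atTop 0, hq, hN,
    eventually_pow_ceil_mul_exp_le_inv hc (div_lt_self (sub_pos.2 hγ) hm)] with n hn hqn hNn hlim
  have hn₀ : (0 : ℝ) < n := by exact_mod_cast hn
  refine (hbound (by exact_mod_cast hNn.trans (Nat.le_ceil _)) (by positivity) hqn ?_).trans hlim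
  calc (1 : ℝ) = (n : ℝ) ^ (1 - γ) * ((n : ℝ) ^ (-((1 - γ) / m2Rel F))) ^ m2Rel F := by
        rw [← Real.rpow_mul hn₀.le, neg_mul, div_mul_cancel₀ _ hm₀.ne', ← Real.rpow_add hn₀,
          add_neg_cancel, Real.rpow_zero]
    _ ≤ _ := by gcongr; exact Nat.le_ceil _

end Asymptotics

end

open Filter in
/-- For acyclic `F⃗` with `m₂(F⃗) > 1` and `0 < γ < 1` there is a constant `B ≥ 1` such
that, with `p = B·n^{-(1-γ)/m₂(F⃗)}`, a.a.s. `G(n,p)[W] → F⃗` for every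
`W ⊆ V(G)` with `|W| ≥ n^{1-γ}`. -/
theorem stmt13 {β : Type*} [Fintype β] (F : β → β → Prop)
    (hor : ∀ a b, F a b → ¬ F b a) (hacyclic : RelAcyclic F)
    (hm : 1 < m2Rel F) (γ : ℝ) (hγ0 : 0 < γ) (hγ1 : γ < 1) :
    ∃ B : ℝ, 1 ≤ B ∧
      Tendsto (fun n : ℕ => probGnp n (B * (n : ℝ) ^ (-((1 - γ) / m2Rel F)))
        (fun G => ∀ W : Finset (Fin n), (n : ℝ) ^ (1 - γ) ≤ (W.card : ℝ) →
          Arrows (SimpleGraph.induce (W : Set (Fin n)) G) F))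
        atTop (nhds 1) := by
  exact (stmt13_general F hacyclic hm).imp fun B hB => ⟨hB.1, hB.2 γ hγ1⟩
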